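/- arXiv:1603.02319 — 4 statements merged into one kernel-verified Lean document; each statement's English description precedes it below -/
import Mathlib

section
/- Let f:(ℝ,0)→(ℝ^m,0) be a curve-germ that is not identically zero on any neighbourhood of 0. Then the following are equivalent: (a) f is quasi-homogeneous, i.e. there exist germs of diffeomorphisms ψ:(ℝ,0)→(ℝ,0) and Ψ:(ℝ^m,0)→(ℝ^m,0) and positive integers λ_1,…,λ_m such that the curve-germ g = Ψ∘f∘ψ satisfies t·g'(t) = (λ_1·g_1(t), …, λ_m·g_m(t)) for all t in a neighbourhood of 0; (b) there exist an integer k with 1≤k≤m and positive integers μ_1 < μ_2 < … < μ_k that are linearly independent over non-negative integers, such that f is A-equivalent to the curve-germ t↦(t^{μ_1},…,t^{μ_k},0,…,0). -/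
open Filter Topology

noncomputable section

/-- A curve-germ: a `C^∞` map from a neighbourhood of `0` in `ℝ` to `ℝ^m` sending `0` to `0`. -/
def IsCurveGerm (m : ℕ) (f : ℝ → (Fin m → ℝ)) : Prop :=
  f 0 = 0 ∧ ∃ U ∈ 𝓝 (0 : ℝ), ContDiffOn ℝ (⊤ : ℕ∞) f U

/-- A germ of diffeomorphism of `(ℝ,0)`. -/
def IsDiffeoGerm1 (φ : ℝ → ℝ) : Prop :=
  φ 0 = 0 ∧ (∃ U ∈ 𝓝 (0 : ℝ), ContDiffOn ℝ (⊤ : ℕ∞) φ U) ∧ deriv φ 0 ≠ 0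

/-- A germ of diffeomorphism of `(ℝ^m,0)`. -/
def IsDiffeoGerm (m : ℕ) (Φ : (Fin m → ℝ) → (Fin m → ℝ)) : Prop :=
  Φ 0 = 0 ∧ (∃ U ∈ 𝓝 (0 : Fin m → ℝ), ContDiffOn ℝ (⊤ : ℕ∞) Φ U) ∧
    ∃ D : (Fin m → ℝ) ≃L[ℝ] (Fin m → ℝ),
      HasFDerivAt Φ (D : (Fin m → ℝ) →L[ℝ] (Fin m → ℝ)) 0

/-- `A`-equivalence of curve-germs. -/
def AEquiv (m : ℕ) (f g : ℝ → (Fin m → ℝ)) : Prop :=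
  ∃ φ Φ, IsDiffeoGerm1 φ ∧ IsDiffeoGerm m Φ ∧ ∀ᶠ t in 𝓝 (0 : ℝ), Φ (f t) = g (φ t)

/-- Positive integers `μ 0, …, μ (k-1)` are linearly independent over non-negative
integers: no `μ j` is a `ℕ`-linear combination of the others. -/
def LinIndepNonneg {k : ℕ} (μ : Fin k → ℕ) : Prop :=
  ∀ j : Fin k, ∀ c : Fin k → ℕ, μ j ≠ ∑ i ∈ Finset.univ.erase j, c i * μ i


open scoped ContDiff

lemma qh_smooth_iff {E F : Type*} [NormedAddCommGroup E] [NormedSpace ℝ E]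
    [NormedAddCommGroup F] [NormedSpace ℝ F] {f : E → F} {x : E} :
    (∃ U ∈ 𝓝 x, ContDiffOn ℝ (⊤ : ℕ∞) f U) ↔ ∀ᶠ y in 𝓝 x, ContDiffAt ℝ ∞ f y := by
  constructor
  · rintro ⟨U, hU, h⟩
    filter_upwards [eventually_mem_nhds_iff.2 hU] with y hy
    exact h.contDiffAt hy
  · intro h
    exact ⟨_, h, fun y hy => ContDiffAt.contDiffWithinAt hy⟩

lemma qh_inv {φ : ℝ → ℝ} (h : IsDiffeoGerm1 φ) : ∃ ψ, IsDiffeoGerm1 ψ ∧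
    (∀ᶠ t in 𝓝 (0 : ℝ), φ (ψ t) = t) ∧ (∀ᶠ t in 𝓝 (0 : ℝ), ψ (φ t) = t) := by
  obtain ⟨h0, hs, hd⟩ := h
  rw [qh_smooth_iff] at hs
  have hs0 : ContDiffAt ℝ ∞ φ 0 := hs.self_of_nhds
  have hsd : HasStrictDerivAt φ (deriv φ 0) 0 := hs0.hasStrictDerivAt (by simp)
  have hsf := hsd.hasStrictFDerivAt_equiv hd
  let e := hsf.toOpenPartialHomeomorph φ
  have he : (e : ℝ → ℝ) = φ := hsf.toOpenPartialHomeomorph_coe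
  have hsrc : (0:ℝ) ∈ e.source := hsf.mem_toOpenPartialHomeomorph_source
  have htgt : (0:ℝ) ∈ e.target := by
    have := e.map_source hsrc
    rwa [he, h0] at this
  have hsymm0 : e.symm 0 = 0 := by
    have := e.left_inv hsrc
    rwa [he, h0] at this
  have hcont : Tendsto e.symm (𝓝 0) (𝓝 0) := by
    have := e.continuousAt_symm htgt
    rwa [ContinuousAt, hsymm0] at this
  have hdc : ContinuousAt (deriv φ) 0 := by
    have : ContDiffAt ℝ 0 (deriv φ) 0 := by
      exact hs0.derivWithin (m := 0) (by simp)
    exact this.continuousAt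
  have hdne : ∀ᶠ t in 𝓝 (0:ℝ), deriv φ t ≠ 0 := hdc.eventually_ne hd
  have hfwd : ∀ᶠ t in 𝓝 (0 : ℝ), φ (e.symm t) = t := by
    filter_upwards [e.open_target.mem_nhds htgt] with t ht
    have := e.right_inv ht
    rwa [he] at this
  have hsm : ∀ᶠ t in 𝓝 (0 : ℝ), ContDiffAt ℝ ∞ e.symm t := by
    filter_upwards [e.open_target.mem_nhds htgt, hcont.eventually hdne, hcont.eventually hs]
      with t ht h1 h2
    refine e.contDiffAt_symm_deriv (f₀' := deriv φ (e.symm t)) h1 ht ?_ ?_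
    · rw [he]; exact (h2.differentiableAt (by simp)).hasDerivAt
    · rw [he]; exact h2
  refine ⟨e.symm, ⟨hsymm0, qh_smooth_iff.2 hsm, ?_⟩, hfwd, ?_⟩
  · have h1 : HasDerivAt e.symm (deriv e.symm 0) 0 :=
      (hsm.self_of_nhds.differentiableAt (by simp)).hasDerivAt
    have h2 : HasDerivAt φ (deriv φ 0) (e.symm 0) := by
      rw [hsymm0]; exact hsd.hasDerivAt
    have h3 := (h2.comp 0 h1).congr_of_eventuallyEq (f₁ := fun t => t)
      (by filter_upwards [hfwd] with t ht using ht.symm)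
    have h4 := h3.unique (hasDerivAt_id' 0)
    intro h5
    rw [h5] at h4
    simp at h4
  · filter_upwards [e.open_source.mem_nhds hsrc] with t ht
    have := e.left_inv ht
    rwa [he] at this

lemma qh_tendsto1 {φ : ℝ → ℝ} (h : IsDiffeoGerm1 φ) : Tendsto φ (𝓝 0) (𝓝 0) := by
  have := (qh_smooth_iff.1 h.2.1).self_of_nhds.continuousAt
  rwa [ContinuousAt, h.1] at this

lemma qh_tendsto {m : ℕ} {Φ} (h : IsDiffeoGerm m Φ) : Tendsto Φ (𝓝 0) (𝓝 0) := by
  have := (qh_smooth_iff.1 h.2.1).self_of_nhds.continuousAt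
  rwa [ContinuousAt, h.1] at this

lemma qh_comp {m : ℕ} {Φ Ψ} (h : IsDiffeoGerm m Φ) (h' : IsDiffeoGerm m Ψ) :
    IsDiffeoGerm m (fun x => Φ (Ψ x)) := by
  have t := qh_tendsto h'
  obtain ⟨h0, hs, D, hD⟩ := h
  obtain ⟨h0', hs', D', hD'⟩ := h'
  refine ⟨by simp [h0, h0'], ?_, D'.trans D, ?_⟩
  · rw [qh_smooth_iff] at *
    filter_upwards [hs', t.eventually hs] with x h1 h2
    exact h2.comp x h1
  · rw [← h0'] at hD
    exact hD.comp 0 hD'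

lemma qh_global {m : ℕ} {Φ Ψ : (Fin m → ℝ) → (Fin m → ℝ)} (h : ContDiff ℝ ∞ Φ)
    (h' : ContDiff ℝ ∞ Ψ) (h0 : Φ 0 = 0) (h1 : ∀ x, Φ (Ψ x) = x) (h2 : ∀ x, Ψ (Φ x) = x) :
    IsDiffeoGerm m Φ := by
  have h0' : Ψ 0 = 0 := by rw [← h0, h2, h0]
  refine ⟨h0, ⟨Set.univ, univ_mem, h.contDiffOn⟩, ?_⟩
  have d1 : HasFDerivAt Φ (fderiv ℝ Φ 0) 0 := (h.differentiable (by simp) 0).hasFDerivAt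
  have d2 : HasFDerivAt Ψ (fderiv ℝ Ψ 0) 0 := (h'.differentiable (by simp) 0).hasFDerivAt
  have e1 : (fderiv ℝ Φ 0).comp (fderiv ℝ Ψ 0) = ContinuousLinearMap.id ℝ _ := by
    have := HasFDerivAt.comp (0 : Fin m → ℝ) (g := Φ) (g' := fderiv ℝ Φ 0)
      (by rw [h0']; exact d1) d2
    rw [show Φ ∘ Ψ = id from funext h1] at this
    exact this.unique (hasFDerivAt_id 0)
  have e2 : (fderiv ℝ Ψ 0).comp (fderiv ℝ Φ 0) = ContinuousLinearMap.id ℝ _ := by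
    have := HasFDerivAt.comp (0 : Fin m → ℝ) (g := Ψ) (g' := fderiv ℝ Ψ 0)
      (by rw [h0]; exact d2) d1
    rw [show Ψ ∘ Φ = id from funext h2] at this
    exact this.unique (hasFDerivAt_id 0)
  refine ⟨ContinuousLinearEquiv.equivOfInverse (fderiv ℝ Φ 0) (fderiv ℝ Ψ 0)
    (fun x => DFunLike.congr_fun e2 x) (fun x => DFunLike.congr_fun e1 x), d1⟩

lemma qh_ode (n : ℕ) : ∀ (g : ℝ → ℝ) (ε : ℝ), 0 < ε →
    (∀ t ∈ Metric.ball (0:ℝ) ε, ContDiffAt ℝ ∞ g t) →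
    (∀ t ∈ Metric.ball (0:ℝ) ε, t * deriv g t = n * g t) →
    ∃ c : ℝ, ∀ t ∈ Metric.ball (0:ℝ) ε, g t = c * t ^ n := by
  induction n with
  | zero =>
    intro g ε hε hs h
    refine ⟨g 0, fun t ht => ?_⟩
    have h0 : (0:ℝ) ∈ Metric.ball (0:ℝ) ε := Metric.mem_ball_self hε
    have hz : ∀ t ∈ Metric.ball (0:ℝ) ε, t ≠ 0 → deriv g t = 0 := by
      intro t ht hne
      have := h t ht
      simpa [hne] using this
    have hd : ∀ t ∈ Metric.ball (0:ℝ) ε, deriv g t = 0 := by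
      intro t ht
      by_cases hne : t = 0
      · subst hne
        have hc : ContinuousAt (deriv g) 0 :=
          (ContDiffAt.derivWithin (hs 0 h0) (m := 0) (by simp)).continuousAt
        have h1 : Tendsto (deriv g) (𝓝[≠] 0) (𝓝 (deriv g 0)) := hc.tendsto.mono_left nhdsWithin_le_nhds
        have h2 : Tendsto (deriv g) (𝓝[≠] 0) (𝓝 0) := by
          refine tendsto_const_nhds.congr' ?_
          filter_upwards [self_mem_nhdsWithin, mem_nhdsWithin_of_mem_nhds (Metric.isOpen_ball.mem_nhds h0)] with s h3 h4
          exact (hz s h4 h3).symm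
        exact tendsto_nhds_unique h1 h2
      · exact hz t ht hne
    have := Metric.isOpen_ball.is_const_of_deriv_eq_zero (convex_ball (0:ℝ) ε).isPreconnected
      (fun t ht => ((hs t ht).differentiableAt (by simp)).differentiableWithinAt)
      (fun t ht => hd t ht) ht h0
    simpa using this
  | succ n ih =>
    intro g ε hε hs h
    have hsd : ∀ t ∈ Metric.ball (0:ℝ) ε, ContDiffAt ℝ ∞ (deriv g) t :=
      fun t ht => ContDiffAt.derivWithin (hs t ht) (by simp)
    obtain ⟨c, hc⟩ := ih (deriv g) ε hε hsd (by
      intro t ht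
      have e : (fun t => t * deriv g t) =ᶠ[𝓝 t] fun t => ((n+1 : ℕ):ℝ) * g t := by
        filter_upwards [Metric.isOpen_ball.mem_nhds ht] with s hs using h s hs
      have d1 := (hasDerivAt_id' t).mul ((hsd t ht).differentiableAt (by simp)).hasDerivAt
      have d2 := (((hs t ht).differentiableAt (by simp)).hasDerivAt.const_mul ((n+1 : ℕ):ℝ)).congr_of_eventuallyEq e
      have := d1.unique d2
      push_cast at this
      linarith)
    refine ⟨c / (n+1), fun t ht => ?_⟩
    have h1 := h t ht
    rw [hc t ht] at h1
    push_cast at h1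
    have : (n:ℝ) + 1 ≠ 0 := by positivity
    field_simp
    rw [mul_comm, ← h1]; ring

lemma qh_comb (S : Finset ℕ) (hS : S.Nonempty) (hpos : ∀ s ∈ S, 0 < s) :
    ∃ (k : ℕ) (μ : Fin k → ℕ), 1 ≤ k ∧ StrictMono μ ∧ (∀ i, μ i ∈ S) ∧ LinIndepNonneg μ ∧
      ∀ s ∈ S, ∃ a : Fin k → ℕ, ∑ j, a j * μ j = s := by
  classical
  let M := S.filter fun s => s ∉ Submodule.span ℕ {t | t ∈ S ∧ t < s}
  let μ := M.orderEmbOfFin rfl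
  have hr : Set.range μ = (M : Set ℕ) := M.range_orderEmbOfFin rfl
  have hM : ∀ i, μ i ∈ M := fun i => M.orderEmbOfFin_mem rfl i
  have hgen : ∀ s ∈ S, s ∈ Submodule.span ℕ (M : Set ℕ) := by
    intro s
    induction s using Nat.strong_induction_on with
    | _ s ih =>
      intro hs
      by_cases h : s ∈ Submodule.span ℕ {t | t ∈ S ∧ t < s}
      · refine Submodule.span_le.2 ?_ h
        rintro t ⟨h1, h2⟩
        exact ih t h2 h1
      · exact Submodule.subset_span (Finset.mem_filter.2 ⟨hs, h⟩)
  refine ⟨M.card, μ, ?_, (M.orderEmbOfFin rfl).strictMono,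
    fun i => (Finset.mem_filter.1 (hM i)).1, ?_, ?_⟩
  · rw [Nat.one_le_iff_ne_zero]
    intro h
    obtain ⟨s, hs⟩ := hS
    have h1 := hgen s hs
    rw [Finset.card_eq_zero.1 h] at h1
    have h2 := hpos s hs
    simp at h1
    omega
  · intro j c hj
    refine (Finset.mem_filter.1 (hM j)).2 ?_
    have key : ∑ i ∈ Finset.univ.erase j, c i * μ i ∈
        Submodule.span ℕ {t | t ∈ S ∧ t < μ j} := by
      refine Submodule.sum_mem _ fun i hi => ?_
      by_cases hc : c i = 0
      · simp [hc]
      · refine Submodule.smul_mem _ (c i) (Submodule.subset_span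
          ⟨(Finset.mem_filter.1 (hM i)).1, ?_⟩)
        refine lt_of_le_of_ne ?_ fun h => (Finset.mem_erase.1 hi).1 (μ.injective h)
        have h1 : c i * μ i ≤ ∑ i ∈ Finset.univ.erase j, c i * μ i :=
          Finset.single_le_sum (f := fun i => c i * μ i) (fun _ _ => Nat.zero_le _) hi
        have h2 := Nat.le_mul_of_pos_left (μ i) (Nat.pos_of_ne_zero hc)
        omega
    rw [← hj] at key
    exact key
  · intro s hs
    have := hgen s hs
    rw [← hr, Submodule.mem_span_range_iff_exists_fun] at this
    simpa using this

lemma qh_perm {k m : ℕ} (ι : Fin k → Fin m) (hι : Function.Injective ι) (hkm : k ≤ m) :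
    ∃ e : Equiv.Perm (Fin m), ∀ j : Fin k, e (Fin.castLE hkm j) = ι j := by
  classical
  let F : Fin m → Fin m := fun l => if h : (l : ℕ) < k then ι ⟨l, h⟩ else l
  obtain ⟨g, hg⟩ := Finset.exists_equiv_extend_of_card_eq (α := Fin m) (t := (Finset.univ : Finset (Fin m)))
    (by simp) (s := Finset.univ.filter fun l : Fin m => (l : ℕ) < k) (f := F) (by simp) (by
      intro a ha b hb hab
      simp at ha hb
      simp only [F, ha, hb, dif_pos] at hab
      have := hι hab
      simp at this
      exact Fin.ext this)
  refine ⟨g.trans (Equiv.subtypeUnivEquiv (by simp)), fun j => ?_⟩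
  have := hg (Fin.castLE hkm j) (by simp)
  simp [Equiv.subtypeUnivEquiv, this, F]

lemma qh_monomial {m : ℕ} (c : Fin m → ℝ) (lam : Fin m → ℕ) (hl : ∀ i, 0 < lam i)
    (hc : ∃ i, c i ≠ 0) :
    ∃ k : ℕ, 1 ≤ k ∧ k ≤ m ∧ ∃ μ : Fin k → ℕ,
        StrictMono μ ∧ (∀ i, 0 < μ i) ∧ LinIndepNonneg μ ∧
        ∃ Φ, IsDiffeoGerm m Φ ∧ ∀ t : ℝ, Φ (fun i => c i * t ^ lam i) =
          (fun i : Fin m => if h : (i : ℕ) < k then t ^ μ ⟨i, h⟩ else 0) := by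
  classical
  let S := (Finset.univ.filter fun i => c i ≠ 0).image lam
  have hSmem : ∀ s, s ∈ S ↔ ∃ i, c i ≠ 0 ∧ lam i = s := by intro s; simp [S]
  obtain ⟨k, μ, hk, hμ, hμS, hli, hgen⟩ := qh_comb S
    (by obtain ⟨i, hi⟩ := hc; exact ⟨lam i, (hSmem _).2 ⟨i, hi, rfl⟩⟩)
    (by intro s hs; obtain ⟨i, _, rfl⟩ := (hSmem s).1 hs; exact hl i)
  have hμpos : ∀ i, 0 < μ i := fun i => by
    obtain ⟨i', _, h⟩ := (hSmem _).1 (hμS i); rw [← h]; exact hl i'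
  have hex : ∀ j, ∃ i, c i ≠ 0 ∧ lam i = μ j := fun j => (hSmem _).1 (hμS j)
  choose ι hι1 hι2 using hex
  have hinj : Function.Injective ι := by
    intro a b hab
    apply hμ.injective
    rw [← hι2, ← hι2, hab]
  have hkm : k ≤ m := by simpa using Fintype.card_le_of_injective ι hinj
  obtain ⟨e, he⟩ := qh_perm ι hinj hkm
  have hexa : ∀ i, ∃ a : Fin k → ℕ, c i ≠ 0 → ∑ j, a j * μ j = lam i := by
    intro i
    by_cases h : c i = 0
    · exact ⟨0, fun h' => absurd h h'⟩
    · obtain ⟨a, ha⟩ := hgen (lam i) ((hSmem _).2 ⟨i, h, rfl⟩)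
      exact ⟨a, fun _ => ha⟩
  choose a ha using hexa
  have ha0 : ∀ i, c i ≠ 0 → ∃ j, a i j ≠ 0 := by
    intro i hi
    by_contra! h
    have := ha i hi
    simp [h] at this
    exact absurd this.symm (hl i).ne'
  -- linear part
  let d : Fin m → ℝ := fun l => if (l : ℕ) < k then c (e l) else 1
  have hd : ∀ l, d l ≠ 0 := by
    intro l
    by_cases h : (l : ℕ) < k
    · have h1 := he ⟨l, h⟩
      have h2 := hι1 ⟨l, h⟩
      rw [← h1] at h2
      simpa [d, h] using h2
    · simp [d, h]
  let L : (Fin m → ℝ) → (Fin m → ℝ) := fun x l => x (e l) / d l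
  let L' : (Fin m → ℝ) → (Fin m → ℝ) := fun y i => y (e.symm i) * d (e.symm i)
  have hL : IsDiffeoGerm m L := by
    refine qh_global (Ψ := L') ?_ ?_ ?_ ?_ ?_
    · exact contDiff_pi.2 fun l => (contDiff_apply ℝ ℝ (e l)).div_const _
    · exact contDiff_pi.2 fun l => (contDiff_apply ℝ ℝ (e.symm l)).mul contDiff_const
    · ext l; simp [L]
    · intro x; ext l; simp [L, L', hd]
    · intro x; ext l; simp [L, L', hd]
  -- shear part
  let Q : (Fin m → ℝ) → (Fin m → ℝ) := fun y l =>
    if (l : ℕ) < k then 0 else c (e l) * ∏ j : Fin k, y (Fin.castLE hkm j) ^ a (e l) j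
  have hQs : ContDiff ℝ ∞ Q := by
    refine contDiff_pi.2 fun l => ?_
    by_cases h : (l : ℕ) < k
    · simp only [Q, h, if_true]; exact contDiff_const
    · simp only [Q, h, if_false]
      exact contDiff_const.mul (contDiff_prod fun j _ => (contDiff_apply ℝ ℝ _).pow _)
  have hQ0 : Q 0 = 0 := by
    ext l
    by_cases h : (l : ℕ) < k
    · simp [Q, h]
    · by_cases h' : c (e l) = 0
      · simp [Q, h']
      · obtain ⟨j, hj⟩ := ha0 _ h'
        have : ∏ j : Fin k, (0 : ℝ) ^ a (e l) j = 0 :=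
          Finset.prod_eq_zero (Finset.mem_univ j) (by simp [hj])
        simp only [Q, this, mul_zero, ite_self, Pi.zero_apply]
  have hQc : ∀ x y : Fin m → ℝ, (∀ l : Fin m, (l : ℕ) < k → x l = y l) → Q x = Q y := by
    intro x y h
    ext l
    simp only [Q]
    congr 2
    refine Finset.prod_congr rfl fun j _ => ?_
    rw [h _ (by simp)]
  have hQz : ∀ (x : Fin m → ℝ) (l : Fin m), (l : ℕ) < k → Q x l = 0 := by
    intro x l h; simp [Q, h]
  have hR : IsDiffeoGerm m (fun y => y - Q y) := by
    refine qh_global (Ψ := fun y => y + Q y) (contDiff_id.sub hQs) (contDiff_id.add hQs) ?_ ?_ ?_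
    · simp [hQ0]
    · intro x
      rw [hQc (x + Q x) x (fun l h => by simp [hQz x l h])]; simp
    · intro x
      rw [hQc (x - Q x) x (fun l h => by simp [hQz x l h])]; simp
  refine ⟨k, hk, hkm, μ, hμ, hμpos, hli, _, qh_comp hR hL, fun t => ?_⟩
  have hLt : ∀ j : Fin k, L (fun i => c i * t ^ lam i) (Fin.castLE hkm j) = t ^ μ j := by
    intro j
    have h1 := hι1 j
    simp [L, d, he, hι2, h1]
  ext l
  by_cases h : (l : ℕ) < k
  · have := hLt ⟨l, h⟩
    simp only [Pi.sub_apply, hQz _ l h, h, dif_pos, sub_zero]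
    exact this
  · simp only [Pi.sub_apply, h, dif_neg, not_false_eq_true]
    simp only [Q, h, if_false, hLt]
    simp only [L, d, h, if_false, div_one]
    by_cases h' : c (e l) = 0
    · simp [h']
    · rw [← ha _ h', Finset.prod_congr rfl fun j _ => (pow_mul' t (a (e l) j) (μ j)).symm,
        Finset.prod_pow_eq_pow_sum, sub_self]

/-- A non-trivial curve-germ is quasi-homogeneous (i.e. in suitable coordinates it
satisfies `t·g'(t) = E ∘ g` for an Euler vector field with positive integer weights)
if and only if it is `A`-equivalent to a monomial curve
`t ↦ (t^{μ₁},…,t^{μ_k},0,…,0)` with `μ₁ < … < μ_k` linearly independent over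
non-negative integers. -/
theorem quasiHomogeneous_iff_monomial (m : ℕ) (f : ℝ → (Fin m → ℝ))
    (hf : IsCurveGerm m f) (hne : ¬ ∀ᶠ t in 𝓝 (0 : ℝ), f t = 0) :
    (∃ (ψ : ℝ → ℝ) (Ψ : (Fin m → ℝ) → (Fin m → ℝ)) (lam : Fin m → ℕ),
        IsDiffeoGerm1 ψ ∧ IsDiffeoGerm m Ψ ∧ (∀ i, 0 < lam i) ∧
        ∀ᶠ t in 𝓝 (0 : ℝ),
          t • deriv (fun s => Ψ (f (ψ s))) t = fun i => (lam i : ℝ) * Ψ (f (ψ t)) i) ↔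
    (∃ k : ℕ, 1 ≤ k ∧ k ≤ m ∧ ∃ μ : Fin k → ℕ,
        StrictMono μ ∧ (∀ i, 0 < μ i) ∧ LinIndepNonneg μ ∧
        AEquiv m f (fun t i => if h : (i : ℕ) < k then t ^ μ ⟨i, h⟩ else 0)) := by
  constructor
  · rintro ⟨ψ, Ψ, lam, hψ, hΨ, hlam, hode⟩
    obtain ⟨φ, hφ, h1, h2⟩ := qh_inv hψ
    have hfs := qh_smooth_iff.1 hf.2
    have hft : Tendsto f (𝓝 0) (𝓝 0) := by
      have := hfs.self_of_nhds.continuousAt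
      rwa [ContinuousAt, hf.1] at this
    have hψt := qh_tendsto1 hψ
    have hφt := qh_tendsto1 hφ
    have hgs : ∀ᶠ t in 𝓝 (0:ℝ), ContDiffAt ℝ ∞ (fun s => Ψ (f (ψ s))) t := by
      filter_upwards [qh_smooth_iff.1 hψ.2.1, hψt.eventually hfs,
        (hft.comp hψt).eventually (qh_smooth_iff.1 hΨ.2.1)] with t a b c
      exact ContDiffAt.comp t (g := Ψ) c (ContDiffAt.comp t (g := f) b a)
    obtain ⟨ε, hε, hball⟩ := Metric.eventually_nhds_iff_ball.1 (hgs.and hode)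
    have hc : ∀ i, ∃ c : ℝ, ∀ t ∈ Metric.ball (0:ℝ) ε, Ψ (f (ψ t)) i = c * t ^ lam i := by
      intro i
      refine qh_ode (lam i) (fun t => Ψ (f (ψ t)) i) ε hε
        (fun t ht => contDiffAt_pi.1 (hball t ht).1 i) fun t ht => ?_
      have h3 := congrFun (hball t ht).2 i
      have h4 := hasDerivAt_pi.1 ((hball t ht).1.differentiableAt (by simp)).hasDerivAt i
      rw [h4.deriv]
      exact h3
    choose c hc using hc
    have hg : ∀ᶠ t in 𝓝 (0:ℝ), Ψ (f (ψ t)) = fun i => c i * t ^ lam i := by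
      filter_upwards [Metric.ball_mem_nhds 0 hε] with t ht
      ext i
      exact hc i t ht
    have hcne : ∃ i, c i ≠ 0 := by
      by_contra! hc0
      apply hne
      obtain ⟨D, hD⟩ := hΨ.2.2
      have hinj : ∀ᶠ x in 𝓝 (0 : Fin m → ℝ), Ψ x = 0 → x = 0 := by
        have := hD.eventually_ne (c := (0 : Fin m → ℝ)) ⟨_, D.antilipschitz⟩
        rw [eventually_nhdsWithin_iff] at this
        filter_upwards [this] with x hx h
        by_contra hx0
        exact hx hx0 h
      filter_upwards [hφt.eventually hg, h1, hft.eventually hinj] with t a b d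
      rw [b] at a
      refine d (a.trans ?_)
      ext i
      simp [hc0]
    obtain ⟨k, hk, hkm, μ, hμ, hμp, hli, Φ, hΦ, hm⟩ := qh_monomial c lam hlam hcne
    refine ⟨k, hk, hkm, μ, hμ, hμp, hli, φ, _, hφ, qh_comp hΦ hΨ, ?_⟩
    filter_upwards [hφt.eventually hg, h1] with t a b
    rw [b] at a
    rw [a, hm]
  · rintro ⟨k, hk, hkm, μ, hμ, hμp, hli, φ, Φ, hφ, hΦ, h⟩
    obtain ⟨ψ, hψ, h1, h2⟩ := qh_inv hφ
    refine ⟨ψ, Φ, fun i => if h : (i : ℕ) < k then μ ⟨i, h⟩ else 1, hψ, hΦ, ?_, ?_⟩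
    · intro i
      by_cases h : (i : ℕ) < k
      · simp [h, hμp]
      · simp [h]
    · have he : ∀ᶠ t in 𝓝 (0:ℝ), Φ (f (ψ t)) =
          (fun i : Fin m => if h : (i : ℕ) < k then t ^ μ ⟨i, h⟩ else 0) := by
        filter_upwards [(qh_tendsto1 hψ).eventually h, h1] with t a b
        rw [a, b]
      filter_upwards [he.eventually_nhds] with t ht
      have hd : HasDerivAt (fun (s : ℝ) (i : Fin m) => if h : (i : ℕ) < k then s ^ μ ⟨i, h⟩ else 0)
          (fun i : Fin m => if h : (i : ℕ) < k then (μ ⟨i, h⟩ : ℝ) * t ^ (μ ⟨i, h⟩ - 1) else 0) t := by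
        refine hasDerivAt_pi.2 fun i => ?_
        by_cases h : (i : ℕ) < k
        · simp only [h, dif_pos]; exact hasDerivAt_pow _ _
        · simp only [h, dif_neg, not_false_eq_true]; exact hasDerivAt_const _ _
      rw [(hd.congr_of_eventuallyEq ht).deriv, ht.self_of_nhds]
      ext i
      by_cases h : (i : ℕ) < k
      · simp only [h, dif_pos, Pi.smul_apply, smul_eq_mul]
        rw [mul_left_comm, mul_pow_sub_one (hμp _).ne']
      · simp [h]
end
end

section
/- Let λ_1,…,λ_m be positive integers, δ a real number, and h a C^∞ real-valued function on a neighbourhood U of 0 in ℝ^m such that h(t^{λ_1}·x_1,…,t^{λ_m}·x_m) = t^δ·h(x_1,…,x_m) for all t∈(0,1] and all x∈U for which the scaled point (t^{λ_1}x_1,…,t^{λ_m}x_m) also lies in U. Then either h vanishes identically on a neighbourhood of 0, or δ is a non-negative integer and there exists a polynomial P∈ℝ[x_1,…,x_m] that is weighted homogeneous of weighted degree δ with respect to the weights (λ_1,…,λ_m) (i.e. every monomial x^α occurring in P satisfies Σ_i α_i·λ_i = δ) such that h(x) = P(x) for all x in a neighbourhood of 0. -/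
open Filter Topology

noncomputable section

lemma qh_multilin_poly {m k : ℕ} (f : ContinuousMultilinearMap ℝ (fun _ : Fin k => (Fin m → ℝ)) ℝ) :
    ∃ p : MvPolynomial (Fin m) ℝ, ∀ y, f (fun _ => y) = MvPolynomial.eval y p := by
  classical
  refine ⟨∑ r : Fin k → Fin m, (∏ i, MvPolynomial.X (r i)) *
    MvPolynomial.C (f (fun i => Pi.single (r i) (1:ℝ))), fun y => ?_⟩
  have hy : y = ∑ j, y j • (Pi.single j (1:ℝ) : Fin m → ℝ) := by
    ext i
    simp [Finset.sum_apply, Pi.single_apply]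
  conv_lhs => rw [hy]
  rw [f.map_sum (fun _ j => y j • (Pi.single j (1:ℝ) : Fin m → ℝ))]
  rw [map_sum]
  refine Finset.sum_congr rfl fun r _ => ?_
  rw [f.map_smul_univ (fun i => y (r i))]
  simp [map_prod]

lemma qh_taylor {m : ℕ} (h : (Fin m → ℝ) → ℝ) (hs : ContDiffAt ℝ (⊤ : ℕ∞) h 0) (n : ℕ) :
    ∃ (Q : MvPolynomial (Fin m) ℝ) (r C : ℝ), 0 < r ∧ ∀ y : Fin m → ℝ, ‖y‖ < r →
      |h y - MvPolynomial.eval y Q| ≤ C * ‖y‖ ^ (n + 1) := by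
  choose p hp using fun k => qh_multilin_poly (iteratedFDeriv ℝ k h 0)
  have hs1 : ContDiffAt ℝ ((n + 1 : ℕ) : WithTop ℕ∞) h 0 := hs.of_le (by exact_mod_cast le_top)
  have hev : ∀ᶠ x in 𝓝 (0 : Fin m → ℝ), ContDiffAt ℝ ((n + 1 : ℕ) : WithTop ℕ∞) h x :=
    hs1.eventually (by simp)
  have hc : ContinuousAt (iteratedFDeriv ℝ (n + 1) h) 0 :=
    (hs1.iteratedFDeriv_right (i := n + 1) (m := 0) (by simp)).continuousAt
  have hb : ∀ᶠ x in 𝓝 (0 : Fin m → ℝ),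
      ‖iteratedFDeriv ℝ (n + 1) h x‖ < ‖iteratedFDeriv ℝ (n + 1) h 0‖ + 1 :=
    hc.norm.eventually (gt_mem_nhds (lt_add_one _))
  obtain ⟨r, hr, H⟩ := Metric.eventually_nhds_iff.1 (hev.and hb)
  set B := ‖iteratedFDeriv ℝ (n + 1) h 0‖ + 1 with hB
  refine ⟨∑ k ∈ Finset.range (n + 1), MvPolynomial.C ((k.factorial : ℝ)⁻¹) * p k, r,
    ‖((n.factorial : ℝ)⁻¹)‖ * B, hr, fun y hy => ?_⟩
  have hin : ∀ t ∈ Set.Icc (0:ℝ) 1, dist ((0 : Fin m → ℝ) + t • y) 0 < r := by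
    intro t ht
    rw [zero_add, dist_zero_right, norm_smul, Real.norm_of_nonneg ht.1]
    exact lt_of_le_of_lt (mul_le_of_le_one_left (norm_nonneg _) ht.2) hy
  have T := map_add_eq_sum_add_integral_iteratedFDeriv (f := h) (x := 0) (y := y) (n := n)
    (fun t ht => by exact_mod_cast (H (hin t ht)).1)
  rw [zero_add] at T
  rw [T]
  simp only [map_sum, map_mul, MvPolynomial.eval_C, ← hp, smul_eq_mul, add_sub_cancel_left]
  rw [abs_mul, mul_assoc, Real.norm_eq_abs]
  refine mul_le_mul_of_nonneg_left ?_ (abs_nonneg _)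
  have := intervalIntegral.norm_integral_le_of_norm_le_const (a := 0) (b := 1)
    (C := B * ‖y‖ ^ (n + 1))
    (f := fun t : ℝ => (1 - t) ^ n * iteratedFDeriv ℝ (n + 1) h (0 + t • y) (fun _ => y)) ?_
  · simpa using this
  · intro t ht
    rw [Set.uIoc_of_le zero_le_one] at ht
    have ht' : t ∈ Set.Icc (0:ℝ) 1 := ⟨ht.1.le, ht.2⟩
    rw [norm_mul, norm_pow]
    have h1 : ‖1 - t‖ ^ n ≤ 1 := by
      apply pow_le_one₀ (norm_nonneg _)
      rw [Real.norm_eq_abs, abs_le]; constructor <;> linarith [ht.1, ht.2]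
    have h2 : ‖iteratedFDeriv ℝ (n + 1) h (0 + t • y) (fun _ => y)‖ ≤ B * ‖y‖ ^ (n + 1) := by
      refine (ContinuousMultilinearMap.le_opNorm _ _).trans ?_
      simp only [Finset.prod_const, Finset.card_univ, Fintype.card_fin]
      exact mul_le_mul_of_nonneg_right (H (hin t ht')).2.le (by positivity)
    exact (mul_le_of_le_one_left (norm_nonneg _) h1).trans h2

lemma qh_unique (S : Finset ℝ) (c : ℝ → ℝ) (C N : ℝ)
    (H : ∀ t ∈ Set.Ioc (0:ℝ) 1, |∑ s ∈ S, c s * t ^ s| ≤ C * t ^ N) :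
    ∀ s ∈ S, s < N → c s = 0 := by
  induction S using Finset.induction_on_min with
  | empty => simp
  | insert a S ha ih =>
    have haS : a ∉ S := fun h => lt_irrefl _ (ha a h)
    by_cases haN : a < N
    · have hca : c a = 0 := by
        have hpow : ∀ e : ℝ, 0 < e → Tendsto (fun t : ℝ => t ^ e) (𝓝[>] 0) (𝓝 0) := by
          intro e he
          have := (Real.continuousAt_rpow_const 0 e (Or.inr he.le)).tendsto
          rw [Real.zero_rpow he.ne'] at this
          exact this.mono_left nhdsWithin_le_nhds
        have hT : Tendsto (fun t : ℝ => c a + ∑ s ∈ S, c s * t ^ (s - a)) (𝓝[>] 0) (𝓝 (c a)) := by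
          have : Tendsto (fun t : ℝ => c a + ∑ s ∈ S, c s * t ^ (s - a)) (𝓝[>] 0)
              (𝓝 (c a + ∑ s ∈ S, c s * 0)) := by
            refine tendsto_const_nhds.add (tendsto_finsetSum _ fun s hs => ?_)
            exact (hpow _ (sub_pos.2 (ha s hs))).const_mul _
          simpa using this
        have hT0 : Tendsto (fun t : ℝ => c a + ∑ s ∈ S, c s * t ^ (s - a)) (𝓝[>] 0) (𝓝 0) := by
          refine squeeze_zero_norm' (a := fun t : ℝ => C * t ^ (N - a)) ?_ ?_
          · filter_upwards [Ioc_mem_nhdsGT (zero_lt_one (α := ℝ))] with t ht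
            have h0 := H t ht
            have hta : 0 < t ^ a := Real.rpow_pos_of_pos ht.1 _
            have e1 : ∑ s ∈ insert a S, c s * t ^ s
                = t ^ a * (c a + ∑ s ∈ S, c s * t ^ (s - a)) := by
              rw [Finset.sum_insert haS, mul_add, Finset.mul_sum]
              congr 1
              · ring
              · refine Finset.sum_congr rfl fun s _ => ?_
                rw [Real.rpow_sub ht.1]; field_simp
            rw [e1, abs_mul, abs_of_pos hta] at h0
            rw [Real.rpow_sub ht.1, Real.norm_eq_abs, ← mul_div_assoc, le_div_iff₀ hta]
            linarith
          · simpa using (hpow _ (sub_pos.2 haN)).const_mul C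
        exact tendsto_nhds_unique hT hT0
      intro s hs hsN
      rcases Finset.mem_insert.1 hs with rfl | hs
      · exact hca
      · refine ih (fun t ht => ?_) s hs hsN
        have := H t ht
        rwa [Finset.sum_insert haS, hca, zero_mul, zero_add] at this
    · intro s hs hsN
      rcases Finset.mem_insert.1 hs with rfl | hs
      · exact absurd hsN haN
      · exact absurd ((ha s hs).trans hsN) haN

lemma qh_main (m : ℕ) (lam : Fin m → ℕ)
    (hpos : ∀ i, 0 < lam i) (δ : ℝ)
    (U : Set (Fin m → ℝ)) (hU : U ∈ 𝓝 (0 : Fin m → ℝ))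
    (h : (Fin m → ℝ) → ℝ) (hsm : ContDiffOn ℝ (⊤ : ℕ∞) h U)
    (hqh : ∀ t : ℝ, t ∈ Set.Ioc (0 : ℝ) 1 → ∀ x ∈ U,
      (fun i => t ^ (lam i) * x i) ∈ U →
      h (fun i => t ^ (lam i) * x i) = t ^ δ * h x) :
    ∃ Q : MvPolynomial (Fin m) ℝ, ∀ᶠ x in 𝓝 (0 : Fin m → ℝ),
      h x = ∑ α ∈ Q.support with ((∑ i, α i * lam i : ℕ) : ℝ) = δ, Q.coeff α * ∏ i, x i ^ α i := by
  classical
  obtain ⟨n, hn⟩ := exists_nat_ge δ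
  obtain ⟨Q, r, C, hr, hQ⟩ := qh_taylor h (hsm.contDiffAt hU) n
  obtain ⟨r', hr', hU'⟩ := Metric.mem_nhds_iff.1 hU
  refine ⟨Q, ?_⟩
  filter_upwards [Metric.ball_mem_nhds (0 : Fin m → ℝ) (lt_min hr hr')] with x hx
  rw [mem_ball_zero_iff, lt_min_iff] at hx
  set w : (Fin m →₀ ℕ) → ℝ := fun α => ((∑ i, α i * lam i : ℕ) : ℝ) with hw
  set S : Finset ℝ := insert δ (Q.support.image w) with hS
  set c : ℝ → ℝ := fun s => (∑ α ∈ Q.support with w α = s, Q.coeff α * ∏ i, x i ^ α i)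
    - (if s = δ then h x else 0) with hc
  have key := qh_unique S c (|C| * ‖x‖ ^ (n + 1)) ((n + 1 : ℕ) : ℝ) ?_ δ (by simp [hS])
    (by push_cast; linarith)
  · simp only [hc, if_true] at key
    linarith
  intro t ht
  set y : Fin m → ℝ := fun i => t ^ lam i * x i with hy
  have hyn : ‖y‖ ≤ t * ‖x‖ := by
    rw [pi_norm_le_iff_of_nonneg (mul_nonneg ht.1.le (norm_nonneg _))]
    intro i
    rw [hy, norm_mul, norm_pow, Real.norm_of_nonneg ht.1.le]
    exact mul_le_mul (pow_le_of_le_one ht.1.le ht.2 (hpos i).ne') (norm_le_pi_norm x i)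
      (norm_nonneg _) ht.1.le
  have hyx : ‖y‖ ≤ ‖x‖ := hyn.trans (mul_le_of_le_one_left (norm_nonneg _) ht.2)
  have hhy : h y = t ^ δ * h x :=
    hqh t ht x (hU' (by simpa using hx.2)) (hU' (by simpa using hyx.trans_lt hx.2))
  have hb := hQ y (hyx.trans_lt hx.1)
  have hsum : ∑ s ∈ S, c s * t ^ s = MvPolynomial.eval y Q - h y := by
    simp only [hc, sub_mul, Finset.sum_sub_distrib]
    congr 1
    · rw [MvPolynomial.eval_eq', ← Finset.sum_fiberwise_of_maps_to (s := Q.support) (t := S) (g := w)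
        (fun α hα => Finset.mem_insert_of_mem (Finset.mem_image_of_mem _ hα))]
      refine Finset.sum_congr rfl fun s _ => ?_
      rw [Finset.sum_mul]
      refine Finset.sum_congr rfl fun α hα => ?_
      rw [← (Finset.mem_filter.1 hα).2, hw, hy]
      simp only [Real.rpow_natCast, mul_pow, Finset.prod_mul_distrib, ← pow_mul,
        Finset.prod_pow_eq_pow_sum]
      simp only [mul_comm (lam _)]
      ring
    · simp [hS, hhy, mul_comm]
  rw [hsum, abs_sub_comm, Real.rpow_natCast]
  calc |h y - MvPolynomial.eval y Q| ≤ C * ‖y‖ ^ (n + 1) := hb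
    _ ≤ |C| * ‖y‖ ^ (n + 1) := mul_le_mul_of_nonneg_right (le_abs_self C) (by positivity)
    _ ≤ |C| * (t * ‖x‖) ^ (n + 1) := by gcongr
    _ = |C| * ‖x‖ ^ (n + 1) * t ^ (n + 1) := by rw [mul_pow]; ring

/-- A quasi-homogeneous germ of a smooth function (with positive integer weights and
real quasi-degree `δ`) is either identically zero near `0`, or `δ` is a non-negative
integer and the germ coincides near `0` with a weighted homogeneous polynomial of
weighted degree `δ`. -/
theorem quasiHomogeneous_function_is_polynomial (m : ℕ) (lam : Fin m → ℕ)
    (hpos : ∀ i, 0 < lam i) (δ : ℝ)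
    (U : Set (Fin m → ℝ)) (hU : U ∈ 𝓝 (0 : Fin m → ℝ))
    (h : (Fin m → ℝ) → ℝ) (hsm : ContDiffOn ℝ (⊤ : ℕ∞) h U)
    (hqh : ∀ t : ℝ, t ∈ Set.Ioc (0 : ℝ) 1 → ∀ x ∈ U,
      (fun i => t ^ (lam i) * x i) ∈ U →
      h (fun i => t ^ (lam i) * x i) = t ^ δ * h x) :
    (∀ᶠ x in 𝓝 (0 : Fin m → ℝ), h x = 0) ∨
    (∃ d : ℕ, δ = (d : ℝ) ∧ ∃ P : MvPolynomial (Fin m) ℝ,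
      (∀ α ∈ P.support, ∑ i, α i * lam i = d) ∧
      ∀ᶠ x in 𝓝 (0 : Fin m → ℝ), h x = MvPolynomial.eval x P) := by
  obtain ⟨Q, hQ⟩ := qh_main m lam hpos δ U hU h hsm hqh
  by_cases hd : ∃ d : ℕ, δ = (d : ℝ)
  · right
    obtain ⟨d, rfl⟩ := hd
    refine ⟨d, rfl, ∑ α ∈ Q.support with ((∑ i, α i * lam i : ℕ) : ℝ) = d,
      MvPolynomial.monomial α (Q.coeff α), ?_, ?_⟩
    · intro β hβ
      obtain ⟨α, hα, hβα⟩ := Finset.mem_biUnion.1 (MvPolynomial.support_sum hβ)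
      have := MvPolynomial.support_monomial_subset hβα
      rw [Finset.mem_singleton] at this
      subst this
      exact_mod_cast (Finset.mem_filter.1 hα).2
    · filter_upwards [hQ] with x hx
      rw [hx, map_sum]
      refine Finset.sum_congr rfl fun α _ => ?_
      rw [MvPolynomial.eval_monomial, Finsupp.prod_fintype _ _ (by simp)]
  · left
    filter_upwards [hQ] with x hx
    rw [hx, Finset.filter_false_of_mem, Finset.sum_empty]
    intro α _ hα
    exact hd ⟨_, hα.symm⟩
end
end

section
/- Let g:(ℝ,0)→(ℝ^4,0) be the curve-germ g(t) = (t^4,t^5,t^6,t^7). For every germ at 0 of a smooth differential 2-form ω on ℝ^4 with dω = 0 on a neighbourhood of 0, there exist unique real numbers c_1,…,c_9 such that the 2-form ω − (c_1·dx_1∧dx_2 + c_2·dx_1∧dx_3 + c_3·dx_2∧dx_3 + c_4·dx_1∧dx_4 + c_5·dx_2∧dx_4 + c_6·dx_3∧dx_4 + c_7·x_1dx_1∧dx_2 + c_8·x_1dx_1∧dx_3 + c_9·x_1dx_1∧dx_4) has zero algebraic restriction to g. (Equivalently: the algebraic restrictions to g of these nine 2-forms form a basis of the vector space of algebraic restrictions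 of closed 2-forms to g.) -/
open Filter Topology

noncomputable section

/-- A (set-theoretic) differential 1-form on `ℝ^m`: a map assigning to each point a
function on tangent vectors. -/
def Form1 (m : ℕ) := (Fin m → ℝ) → (Fin m → ℝ) → ℝ

/-- A (set-theoretic) differential 2-form on `ℝ^m`. -/
def Form2 (m : ℕ) := (Fin m → ℝ) → (Fin m → ℝ) → (Fin m → ℝ) → ℝ

/-- A germ at `0` of a smooth differential 1-form: pointwise linear in the tangent
vector, and with coefficients smooth on a neighbourhood of `0`. -/
def IsForm1 (m : ℕ) (β : Form1 m) : Prop :=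
  (∀ x u₁ u₂ (c : ℝ), β x (u₁ + c • u₂) = β x u₁ + c * β x u₂) ∧
  (∀ u, ∃ U ∈ 𝓝 (0 : Fin m → ℝ), ContDiffOn ℝ (⊤ : ℕ∞) (fun x => β x u) U)

/-- A germ at `0` of a smooth differential 2-form: pointwise bilinear and alternating
in the tangent vectors, with coefficients smooth on a neighbourhood of `0`. -/
def IsForm2 (m : ℕ) (ω : Form2 m) : Prop :=
  (∀ x u₁ u₂ v (c : ℝ), ω x (u₁ + c • u₂) v = ω x u₁ v + c * ω x u₂ v) ∧
  (∀ x u v, ω x u v = - ω x v u) ∧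
  (∀ u v, ∃ U ∈ 𝓝 (0 : Fin m → ℝ), ContDiffOn ℝ (⊤ : ℕ∞) (fun x => ω x u v) U)

/-- The exterior derivative of a 1-form, evaluated on a pair of (constant) vectors. -/
def extD1 (m : ℕ) (β : Form1 m) : Form2 m :=
  fun x u v => fderiv ℝ (fun y => β y v) x u - fderiv ℝ (fun y => β y u) x v

/-- The exterior derivative of a 2-form, evaluated on a triple of (constant) vectors. -/
def extD2 (m : ℕ) (ω : Form2 m) (x u v w : Fin m → ℝ) : ℝ :=
  fderiv ℝ (fun y => ω y v w) x u - fderiv ℝ (fun y => ω y u w) x v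
    + fderiv ℝ (fun y => ω y u v) x w

/-- A 2-form is closed near `0` if its exterior derivative vanishes near `0`. -/
def Closed2 (m : ℕ) (ω : Form2 m) : Prop :=
  ∀ᶠ x in 𝓝 (0 : Fin m → ℝ), ∀ u v w, extD2 m ω x u v w = 0

/-- A 1-form vanishes on the image of a curve-germ. -/
def VanishesOn1 (m : ℕ) (β : Form1 m) (f : ℝ → (Fin m → ℝ)) : Prop :=
  ∀ᶠ t in 𝓝 (0 : ℝ), ∀ u, β (f t) u = 0

/-- A 2-form vanishes on the image of a curve-germ. -/
def VanishesOn2 (m : ℕ) (ω : Form2 m) (f : ℝ → (Fin m → ℝ)) : Prop :=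
  ∀ᶠ t in 𝓝 (0 : ℝ), ∀ u v, ω (f t) u v = 0

/-- A 2-form `ω` has zero algebraic restriction to the curve-germ `f` if `ω = α + dβ`
near `0` for a smooth 2-form `α` and a smooth 1-form `β` both vanishing on `im f`. -/
def ZeroAR2 (m : ℕ) (ω : Form2 m) (f : ℝ → (Fin m → ℝ)) : Prop :=
  ∃ (α : Form2 m) (β : Form1 m), IsForm2 m α ∧ IsForm1 m β ∧
    VanishesOn2 m α f ∧ VanishesOn1 m β f ∧
    ∀ᶠ x in 𝓝 (0 : Fin m → ℝ), ∀ u v, ω x u v = α x u v + extD1 m β x u v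

/-- Two 2-forms have the same algebraic restriction to `f` if their difference has
zero algebraic restriction to `f`. -/
def SameAR2 (m : ℕ) (ω₁ ω₂ : Form2 m) (f : ℝ → (Fin m → ℝ)) : Prop :=
  ZeroAR2 m (fun x u v => ω₁ x u v - ω₂ x u v) f

/-- The pullback of a 2-form by a (germ of) smooth map. -/
def pull2 (m : ℕ) (Φ : (Fin m → ℝ) → (Fin m → ℝ)) (ω : Form2 m) : Form2 m :=
  fun x u v => ω (Φ x) (fderiv ℝ Φ x u) (fderiv ℝ Φ x v)

/-- The constant 2-form `dxᵢ ∧ dxⱼ` on `ℝ^m` (indices `0`-based). -/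
def wedge (m : ℕ) (i j : Fin m) : Form2 m := fun _ u v => u i * v j - u j * v i

/-- The 2-form `x_l · dxᵢ ∧ dxⱼ` on `ℝ^m` (indices `0`-based). -/
def mwedge (m : ℕ) (l i j : Fin m) : Form2 m :=
  fun x u v => x l * (u i * v j - u j * v i)

/-- The nine 2-forms of Proposition 4.2. -/
def basis4567 : Fin 9 → Form2 4 :=
  ![wedge 4 0 1, wedge 4 0 2, wedge 4 1 2, wedge 4 0 3, wedge 4 1 3, wedge 4 2 3,
    mwedge 4 0 0 1, mwedge 4 0 0 2, mwedge 4 0 0 3]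

lemma hd_param {E : Type} [NormedAddCommGroup E] [NormedSpace ℝ E] [ProperSpace E] (n : ℕ) :
    ∀ {G : Type} [NormedAddCommGroup G] [NormedSpace ℝ G] [CompleteSpace G] (F : E × ℝ → G),
    ContDiff ℝ n F → ContDiff ℝ n (fun x => ∫ s in (0:ℝ)..1, F (x, s)) := by
  induction n with
  | zero =>
    intro G _ _ _ F hF
    have hF' : Continuous F := hF.continuous
    simp only [Nat.cast_zero, contDiff_zero]
    exact intervalIntegral.continuous_parametric_intervalIntegral_of_continuous'
      (f := fun x s => F (x, s)) hF' 0 1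
  | succ n ih =>
    intro G _ _ _ F hF
    have hFc : Continuous F := hF.continuous
    have hD : ContDiff ℝ n (fderiv ℝ F) := hF.fderiv_right (by push_cast; exact le_rfl)
    let F' : E × ℝ → (E →L[ℝ] G) := fun p => (fderiv ℝ F p).comp (ContinuousLinearMap.inl ℝ E ℝ)
    have hF' : ContDiff ℝ n F' := hD.clm_comp contDiff_const
    have hF'c : Continuous F' := hF'.continuous
    have hder : ∀ x s, HasFDerivAt (fun x => F (x, s)) (F' (x, s)) x := by
      intro x s
      have h1 : HasFDerivAt F (fderiv ℝ F (x, s)) (x, s) :=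
        (hF.differentiable (by simp)).differentiableAt.hasFDerivAt
      exact h1.comp x (hasFDerivAt_prodMk_left x s)
    have key : ∀ x, HasFDerivAt (fun x => ∫ s in (0:ℝ)..1, F (x, s))
        (∫ s in (0:ℝ)..1, F' (x, s)) x := by
      intro x
      obtain ⟨C, hC⟩ := ((isCompact_closedBall x 1).prod (isCompact_Icc (a := (0:ℝ)) (b := 1))).exists_bound_of_continuousOn hF'c.continuousOn
      refine intervalIntegral.hasFDerivAt_integral_of_dominated_of_fderiv_le
        (F := fun x s => F (x, s)) (F' := fun x s => F' (x, s)) (bound := fun _ => C)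
        (Metric.closedBall_mem_nhds x one_pos) ?_ ?_ ?_ ?_ ?_ ?_
      · exact Eventually.of_forall fun y => (hFc.comp (by fun_prop : Continuous fun s : ℝ => (y, s))).aestronglyMeasurable
      · exact (hFc.comp (by fun_prop : Continuous fun s : ℝ => (x, s))).intervalIntegrable _ _
      · exact (hF'c.comp (by fun_prop : Continuous fun s : ℝ => (x, s))).aestronglyMeasurable
      · refine Eventually.of_forall fun s hs y hy => hC (y, s) ⟨hy, ?_⟩
        rw [Set.uIoc_of_le zero_le_one] at hs
        exact ⟨hs.1.le, hs.2⟩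
      · exact intervalIntegrable_const
      · exact Eventually.of_forall fun s hs y hy => hder y s
    push_cast
    rw [contDiff_succ_iff_fderiv]
    refine ⟨fun x => (key x).differentiableAt, by simp, ?_⟩
    have : fderiv ℝ (fun x => ∫ s in (0:ℝ)..1, F (x, s)) = fun x => ∫ s in (0:ℝ)..1, F' (x, s) :=
      funext fun x => (key x).fderiv
    rw [this]
    exact ih F' hF'

lemma hd_hadamard (F : (Fin 4 → ℝ) → ℝ) (hF : ContDiff ℝ (⊤ : ℕ∞) F) :
    ∃ G : Fin 4 → (Fin 4 → ℝ) → ℝ, (∀ i, ContDiff ℝ (⊤ : ℕ∞) (G i)) ∧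
      ∀ x, F x = F 0 + ∑ i, x i * G i x := by
  have hD : ContDiff ℝ (⊤ : ℕ∞) (fderiv ℝ F) := hF.fderiv_right (by simp)
  refine ⟨fun i x => ∫ s in (0:ℝ)..1, fderiv ℝ F (s • x) (Pi.single i 1), fun i => ?_, fun x => ?_⟩
  · rw [contDiff_infty]
    intro n
    refine hd_param n (fun p : (Fin 4 → ℝ) × ℝ => fderiv ℝ F (p.2 • p.1) (Pi.single i 1)) ?_
    refine ContDiff.clm_apply ?_ contDiff_const
    have := hD.of_le (m := n) (by exact_mod_cast le_top)
    exact this.comp (by fun_prop)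
  · have h1 : ∀ s ∈ Set.uIcc (0:ℝ) 1, HasDerivAt (fun s : ℝ => F (s • x)) (fderiv ℝ F (s • x) x) s := by
      intro s _
      have h1 : HasFDerivAt F (fderiv ℝ F (s • x)) (s • x) :=
        (hF.differentiable (by simp)).differentiableAt.hasFDerivAt
      have h2 : HasDerivAt (fun s : ℝ => s • x) x s := by
        simpa using (hasDerivAt_id s).smul_const x
      exact h1.comp_hasDerivAt s h2
    have hc : ∀ v, Continuous fun s : ℝ => fderiv ℝ F (s • x) v := fun v =>
      (hD.continuous.comp (by fun_prop : Continuous fun s : ℝ => s • x)).clm_apply continuous_const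
    have h2 := intervalIntegral.integral_eq_sub_of_hasDerivAt h1 ((hc x).intervalIntegrable _ _)
    simp only [one_smul, zero_smul] at h2
    have h3 : ∀ s : ℝ, fderiv ℝ F (s • x) x = ∑ i, x i * fderiv ℝ F (s • x) (Pi.single i 1) := by
      intro s
      generalize fderiv ℝ F (s • x) = D
      conv_lhs => rw [pi_eq_sum_univ' x]
      simp [map_sum]
    simp only [h3] at h2
    rw [intervalIntegral.integral_finsetSum
      (fun i _ => ((hc _).const_mul _ |>.intervalIntegrable _ _))] at h2
    simp only [intervalIntegral.integral_const_mul] at h2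
    linarith

lemma hd_cut (F : (Fin 4 → ℝ) → ℝ) (h : ∃ U ∈ 𝓝 (0 : Fin 4 → ℝ), ContDiffOn ℝ (⊤ : ℕ∞) F U) :
    ∃ F' : (Fin 4 → ℝ) → ℝ, ContDiff ℝ (⊤ : ℕ∞) F' ∧ F' =ᶠ[𝓝 0] F := by
  obtain ⟨U, hU, hF⟩ := h
  obtain ⟨r, hr, hrU⟩ := Metric.nhds_basis_ball.mem_iff.1 hU
  let φ : ContDiffBump (0 : Fin 4 → ℝ) := ⟨r / 4, r / 2, by positivity, by linarith⟩
  refine ⟨fun x => φ x * F x, ?_, ?_⟩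
  · rw [contDiff_iff_contDiffAt]
    intro x
    by_cases hx : x ∈ Metric.ball (0 : Fin 4 → ℝ) r
    · exact φ.contDiff.contDiffAt.mul
        (hF.contDiffAt (mem_of_superset (Metric.isOpen_ball.mem_nhds hx) hrU))
    · have : (fun x => φ x * F x) =ᶠ[𝓝 x] fun _ => 0 := by
        have hx' : x ∈ (Metric.closedBall (0 : Fin 4 → ℝ) (r / 2))ᶜ := by
          simp only [Metric.mem_ball, not_lt, Set.mem_compl_iff, Metric.mem_closedBall, not_le] at hx ⊢
          linarith
        filter_upwards [Metric.isClosed_closedBall.isOpen_compl.mem_nhds hx'] with y hy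
        have : φ y = 0 := φ.zero_of_le_dist (by
          simp only [Set.mem_compl_iff, Metric.mem_closedBall, not_le] at hy
          exact hy.le)
        simp [this]
      exact contDiffAt_const.congr_of_eventuallyEq this
  · filter_upwards [φ.eventuallyEq_one] with x hx
    simp [hx]

def gcur : ℝ → (Fin 4 → ℝ) := fun t => ![t^4, t^5, t^6, t^7]

lemma hd_quad (F : (Fin 4 → ℝ) → ℝ) (hF : ContDiff ℝ (⊤ : ℕ∞) F) :
    ∃ q : Fin 4 → (Fin 4 → ℝ) → ℝ, (∀ i, ContDiff ℝ (⊤ : ℕ∞) (q i)) ∧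
      ∀ t, F (gcur t) = F 0 + (fderiv ℝ F 0 (Pi.single 0 1) * t^4 + fderiv ℝ F 0 (Pi.single 1 1) * t^5
        + fderiv ℝ F 0 (Pi.single 2 1) * t^6 + fderiv ℝ F 0 (Pi.single 3 1) * t^7) +
        (q 0 (gcur t) * t^8 + q 1 (gcur t) * t^9 + q 2 (gcur t) * t^10 + q 3 (gcur t) * t^11) := by
  obtain ⟨G, hG, hFG⟩ := hd_hadamard F hF
  choose Q hQ hGQ using fun i => hd_hadamard (G i) (hG i)
  have hL : ∀ k, fderiv ℝ F 0 (Pi.single k 1) = G k 0 := by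
    intro k
    have h1 : HasFDerivAt F (∑ i, G i 0 • (ContinuousLinearMap.proj i : (Fin 4 → ℝ) →L[ℝ] ℝ)) 0 := by
      have : F = fun x => F 0 + ∑ i, x i * G i x := funext hFG
      rw [this]
      refine HasFDerivAt.const_add _ ?_
      refine HasFDerivAt.fun_sum fun i _ => ?_
      have h2 := ((ContinuousLinearMap.proj i : (Fin 4 → ℝ) →L[ℝ] ℝ).hasFDerivAt (x := 0)).mul
        ((hG i).differentiable (by simp)).differentiableAt.hasFDerivAt (x := 0)
      exact h2.congr_fderiv (by ext; simp)
    rw [h1.fderiv]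
    simp [Pi.single_apply]
  refine ⟨![fun x => Q 0 0 x + x 0 * (Q 1 3 x + Q 2 2 x + Q 3 1 x),
    fun x => Q 0 1 x + Q 1 0 x + x 0 * (Q 2 3 x + Q 3 2 x),
    fun x => Q 0 2 x + Q 1 1 x + Q 2 0 x + x 0 * Q 3 3 x,
    fun x => Q 0 3 x + Q 1 2 x + Q 2 1 x + Q 3 0 x], ?_, ?_⟩
  · intro i
    fin_cases i <;> simp <;> fun_prop
  · intro t
    rw [hFG (gcur t), hL, hL, hL, hL]
    simp only [Fin.sum_univ_four]
    rw [hGQ 0 (gcur t), hGQ 1 (gcur t), hGQ 2 (gcur t), hGQ 3 (gcur t)]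
    simp only [Fin.sum_univ_four]
    simp [gcur]
    ring

lemma hd_step (a : ℝ) (S : ℝ → ℝ) (hS : ContinuousAt S 0)
    (h : ∀ᶠ t in 𝓝[≠] (0:ℝ), a + t * S t = 0) : a = 0 ∧ ∀ᶠ t in 𝓝[≠] (0:ℝ), S t = 0 := by
  have h1 : ContinuousAt (fun t => a + t * S t) 0 := by fun_prop
  have h2 : Tendsto (fun t => a + t * S t) (𝓝[≠] 0) (𝓝 (a + 0 * S 0)) := h1.tendsto.mono_left nhdsWithin_le_nhds
  have h3 : Tendsto (fun t => a + t * S t) (𝓝[≠] (0:ℝ)) (𝓝 0) :=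
    tendsto_const_nhds.congr' (by filter_upwards [h] with t ht using ht.symm)
  have ha : a = 0 := by simpa using tendsto_nhds_unique h2 h3
  refine ⟨ha, ?_⟩
  filter_upwards [h, self_mem_nhdsWithin] with t ht ht0
  rw [ha, zero_add] at ht
  exact (mul_eq_zero.1 ht).resolve_left ht0

lemma hd_poly (a0 a1 a2 a3 a4 a5 a6 a7 : ℝ) (R : ℝ → ℝ) (hR : Continuous R)
    (h : ∀ᶠ t in 𝓝[≠] (0:ℝ), a0 + a1 * t + a2 * t^2 + a3 * t^3 + a4 * t^4 + a5 * t^5 + a6 * t^6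
      + a7 * t^7 + t^8 * R t = 0) :
    a0 = 0 ∧ a1 = 0 ∧ a2 = 0 ∧ a3 = 0 ∧ a4 = 0 ∧ a5 = 0 ∧ a6 = 0 ∧ a7 = 0 := by
  obtain ⟨h0, h⟩ := hd_step a0 (fun t => a1 + t * (a2 + t * (a3 + t * (a4 + t * (a5 + t * (a6 + t * (a7 + t * R t)))))))
    (by fun_prop) (h.mono fun t ht => by linear_combination ht)
  obtain ⟨h1, h⟩ := hd_step _ _ (by fun_prop) h
  obtain ⟨h2, h⟩ := hd_step _ _ (by fun_prop) h
  obtain ⟨h3, h⟩ := hd_step _ _ (by fun_prop) h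
  obtain ⟨h4, h⟩ := hd_step _ _ (by fun_prop) h
  obtain ⟨h5, h⟩ := hd_step _ _ (by fun_prop) h
  obtain ⟨h6, h⟩ := hd_step _ _ (by fun_prop) h
  obtain ⟨h7, h⟩ := hd_step _ _ (by fun_prop) h
  exact ⟨h0, h1, h2, h3, h4, h5, h6, h7⟩

def hfp : Fin 6 → (Fin 4 → ℝ) → ℝ :=
  ![fun x => x 1 * x 1 - x 0 * x 2, fun x => x 0 * x 3 - x 1 * x 2, fun x => x 2 * x 2 - x 1 * x 3,
    fun x => x 0 * (x 0 * x 0) - x 2 * x 2, fun x => x 2 * x 3 - x 0 * (x 0 * x 1),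
    fun x => x 3 * x 3 - x 0 * (x 0 * x 2)]

def hdfp : Fin 6 → ℝ → (Fin 4 → ℝ) → ℝ :=
  ![fun t u => (-1) * t^6 * u 0 + (2) * t^5 * u 1 + (-1) * t^4 * u 2,
    fun t u => (1) * t^7 * u 0 + (-1) * t^6 * u 1 + (-1) * t^5 * u 2 + (1) * t^4 * u 3,
    fun t u => (-1) * t^7 * u 1 + (2) * t^6 * u 2 + (-1) * t^5 * u 3,
    fun t u => (3) * t^8 * u 0 + (-2) * t^6 * u 2,
    fun t u => (-2) * t^9 * u 0 + (-1) * t^8 * u 1 + (1) * t^7 * u 2 + (1) * t^6 * u 3,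
    fun t u => (-2) * t^10 * u 0 + (-1) * t^8 * u 2 + (2) * t^7 * u 3]

lemma hfp_smooth (j : Fin 6) : ContDiff ℝ (⊤ : ℕ∞) (hfp j) := by
  fin_cases j <;> simp [hfp] <;> fun_prop

lemma hfp_zero (j : Fin 6) (t : ℝ) : hfp j (gcur t) = 0 := by
  fin_cases j <;> simp [hfp, gcur] <;> ring

lemma hfp_deriv (j : Fin 6) (t : ℝ) (u : Fin 4 → ℝ) :
    fderiv ℝ (hfp j) (gcur t) u = hdfp j t u := by
  have p : ∀ i : Fin 4, HasFDerivAt (fun x : Fin 4 → ℝ => x i)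
    (ContinuousLinearMap.proj i : (Fin 4 → ℝ) →L[ℝ] ℝ) (gcur t) := fun i =>
      (ContinuousLinearMap.proj i : (Fin 4 → ℝ) →L[ℝ] ℝ).hasFDerivAt
  fin_cases j
  · have h := ((p 1).fun_mul (p 1)).fun_sub ((p 0).fun_mul (p 2))
    simp only [hfp, hdfp]
    refine (congrArg (fun D => D u) h.fderiv).trans ?_
    simp [gcur]; ring
  · have h := ((p 0).fun_mul (p 3)).fun_sub ((p 1).fun_mul (p 2))
    simp only [hfp, hdfp]
    refine (congrArg (fun D => D u) h.fderiv).trans ?_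
    simp [gcur]; ring
  · have h := ((p 2).fun_mul (p 2)).fun_sub ((p 1).fun_mul (p 3))
    simp only [hfp, hdfp]
    refine (congrArg (fun D => D u) h.fderiv).trans ?_
    simp [gcur]; ring
  · have h := ((p 0).fun_mul ((p 0).fun_mul (p 0))).fun_sub ((p 2).fun_mul (p 2))
    simp only [hfp, hdfp]
    refine (congrArg (fun D => D u) h.fderiv).trans ?_
    simp [gcur]; ring
  · have h := ((p 2).fun_mul (p 3)).fun_sub ((p 0).fun_mul ((p 0).fun_mul (p 1)))
    simp only [hfp, hdfp]
    refine (congrArg (fun D => D u) h.fderiv).trans ?_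
    simp [gcur]; ring
  · have h := ((p 3).fun_mul (p 3)).fun_sub ((p 0).fun_mul ((p 0).fun_mul (p 2)))
    simp only [hfp, hdfp]
    refine (congrArg (fun D => D u) h.fderiv).trans ?_
    simp [gcur]; ring

lemma hd_exist (ω : Form2 4) (hω : IsForm2 4 ω) (H : Fin 6 → Fin 4 → (Fin 4 → ℝ) → ℝ)
    (hH : ∀ j i, ContDiff ℝ (⊤ : ℕ∞) (H j i))
    (h : ∀ᶠ t in 𝓝 (0:ℝ), ∀ u v, ω (gcur t) u v =
      ∑ i, ∑ j, H j i (gcur t) * (hdfp j t u * v i - hdfp j t v * u i)) :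
    ZeroAR2 4 ω gcur := by
  let B : Fin 4 → (Fin 4 → ℝ) → ℝ := fun i x => ∑ j, H j i x * hfp j x
  have hB : ∀ i, ContDiff ℝ (⊤ : ℕ∞) (B i) := fun i =>
    ContDiff.sum fun j _ => (hH j i).mul (hfp_smooth j)
  have hB0 : ∀ i t, B i (gcur t) = 0 := fun i t => by simp [B, hfp_zero]
  have hBd : ∀ i t u, fderiv ℝ (B i) (gcur t) u = ∑ j, H j i (gcur t) * hdfp j t u := by
    intro i t u
    have h1 : HasFDerivAt (B i) (∑ j, (H j i (gcur t) • fderiv ℝ (hfp j) (gcur t) +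
        hfp j (gcur t) • fderiv ℝ (H j i) (gcur t))) (gcur t) := by
      refine HasFDerivAt.fun_sum fun j _ => ?_
      exact (((hH j i).differentiable (by simp)).differentiableAt.hasFDerivAt).fun_mul
        (((hfp_smooth j).differentiable (by simp)).differentiableAt.hasFDerivAt)
    rw [h1.fderiv]
    simp [hfp_zero, hfp_deriv]
  let β : Form1 4 := fun x u => ∑ i, B i x * u i
  have hβd : ∀ x u v, extD1 4 β x u v = ∑ i, (fderiv ℝ (B i) x u * v i - fderiv ℝ (B i) x v * u i) := by
    intro x u v
    have h1 : ∀ v, fderiv ℝ (fun y => β y v) x = ∑ i, v i • fderiv ℝ (B i) x := by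
      intro v
      refine HasFDerivAt.fderiv ?_
      refine HasFDerivAt.fun_sum fun i _ => ?_
      exact (((hB i).differentiable (by simp)).differentiableAt.hasFDerivAt).mul_const (v i)
    simp only [extD1, h1]
    simp only [sum_apply, smul_apply, smul_eq_mul,
      ← Finset.sum_sub_distrib]
    exact Finset.sum_congr rfl fun i _ => by ring
  refine ⟨fun x u v => ω x u v - extD1 4 β x u v, β, ⟨?_, ?_, ?_⟩, ⟨?_, ?_⟩, ?_, ?_, ?_⟩
  · intro x u₁ u₂ v c
    have e : extD1 4 β x (u₁ + c • u₂) v = extD1 4 β x u₁ v + c * extD1 4 β x u₂ v := by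
      rw [hβd, hβd, hβd]
      simp only [map_add, map_smul, smul_eq_mul, Pi.add_apply, Pi.smul_apply, Fin.sum_univ_four]
      ring
    linear_combination hω.1 x u₁ u₂ v c - e
  · intro x u v
    have e : extD1 4 β x u v = - extD1 4 β x v u := by
      rw [hβd, hβd]
      simp only [Fin.sum_univ_four]
      ring
    linear_combination hω.2.1 x u v - e
  · intro u v
    obtain ⟨U, hU, hs⟩ := hω.2.2 u v
    refine ⟨U, hU, hs.sub (ContDiff.contDiffOn ?_)⟩
    simp only [hβd]
    have : ∀ i u, ContDiff ℝ (⊤ : ℕ∞) (fun x => fderiv ℝ (B i) x u) := fun i u =>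
      ((hB i).fderiv_right (by simp)).clm_apply contDiff_const
    refine ContDiff.sum fun i _ => ((this i u).mul contDiff_const).sub ((this i v).mul contDiff_const)
  · intro x u₁ u₂ c
    simp only [β, Pi.add_apply, Pi.smul_apply, smul_eq_mul, Fin.sum_univ_four]
    ring
  · intro u
    refine ⟨Set.univ, univ_mem, ContDiff.contDiffOn ?_⟩
    exact ContDiff.sum fun i _ => (hB i).mul contDiff_const
  · filter_upwards [h] with t ht u v
    rw [ht, hβd, sub_eq_zero]
    refine Finset.sum_congr rfl fun i _ => ?_
    rw [hBd, hBd, Finset.sum_mul, Finset.sum_mul, ← Finset.sum_sub_distrib]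
    exact Finset.sum_congr rfl fun j _ => by ring
  · exact Eventually.of_forall fun t u => by simp [β, hB0]
  · exact Eventually.of_forall fun x u v => by ring

lemma hd_all4 {α : Type*} {P : α → Prop} {a b c d : α} (ha : P a) (hb : P b) (hc : P c) (hd : P d) :
    ∀ i, P (![a, b, c, d] i) := by
  intro i
  fin_cases i
  exacts [ha, hb, hc, hd]

lemma hd_all6 {α : Type*} {P : α → Prop} {a b c d e f : α} (ha : P a) (hb : P b) (hc : P c)
    (hd : P d) (he : P e) (hf : P f) :
    ∀ i, P (![a, b, c, d, e, f] i) := by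
  intro i
  fin_cases i
  exacts [ha, hb, hc, hd, he, hf]

lemma hd_expand (h : Fin 6 → Fin 4 → ℝ) (t : ℝ) (u v : Fin 4 → ℝ) :
    ∑ i, ∑ j, h j i * (hdfp j t u * v i - hdfp j t v * u i) =
      ((-2) * t^5 * h 0 0 + (-1) * t^6 * h 0 1 + (1) * t^6 * h 1 0 + (1) * t^7 * h 1 1 + (1) * t^7 * h 2 0 + (3) * t^8 * h 3 1 + (1) * t^8 * h 4 0 + (-2) * t^9 * h 4 1 + (-2) * t^10 * h 5 1) * (u 0 * v 1 - u 1 * v 0)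
      + ((1) * t^4 * h 0 0 + (-1) * t^6 * h 0 2 + (1) * t^5 * h 1 0 + (1) * t^7 * h 1 2 + (-2) * t^6 * h 2 0 + (2) * t^6 * h 3 0 + (3) * t^8 * h 3 2 + (-1) * t^7 * h 4 0 + (-2) * t^9 * h 4 2 + (1) * t^8 * h 5 0 + (-2) * t^10 * h 5 2) * (u 0 * v 2 - u 2 * v 0)
      + ((-1) * t^6 * h 0 3 + (-1) * t^4 * h 1 0 + (1) * t^7 * h 1 3 + (1) * t^5 * h 2 0 + (3) * t^8 * h 3 3 + (-1) * t^6 * h 4 0 + (-2) * t^9 * h 4 3 + (-2) * t^7 * h 5 0 + (-2) * t^10 * h 5 3) * (u 0 * v 3 - u 3 * v 0)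
      + ((1) * t^4 * h 0 1 + (2) * t^5 * h 0 2 + (1) * t^5 * h 1 1 + (-1) * t^6 * h 1 2 + (-2) * t^6 * h 2 1 + (-1) * t^7 * h 2 2 + (2) * t^6 * h 3 1 + (-1) * t^7 * h 4 1 + (-1) * t^8 * h 4 2 + (1) * t^8 * h 5 1) * (u 1 * v 2 - u 2 * v 1)
      + ((2) * t^5 * h 0 3 + (-1) * t^4 * h 1 1 + (-1) * t^6 * h 1 3 + (1) * t^5 * h 2 1 + (-1) * t^7 * h 2 3 + (-1) * t^6 * h 4 1 + (-1) * t^8 * h 4 3 + (-2) * t^7 * h 5 1) * (u 1 * v 3 - u 3 * v 1)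
      + ((-1) * t^4 * h 0 3 + (-1) * t^4 * h 1 2 + (-1) * t^5 * h 1 3 + (1) * t^5 * h 2 2 + (2) * t^6 * h 2 3 + (-2) * t^6 * h 3 3 + (-1) * t^6 * h 4 2 + (1) * t^7 * h 4 3 + (-2) * t^7 * h 5 2 + (-1) * t^8 * h 5 3) * (u 2 * v 3 - u 3 * v 2) := by
  simp only [Fin.sum_univ_four, Fin.sum_univ_six]
  simp [hdfp]
  ring

lemma hd_basisx (c : Fin 9 → ℝ) (x u v : Fin 4 → ℝ) :
    ∑ k, c k * basis4567 k x u v =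
      (c 0 + c 6 * x 0) * (u 0 * v 1 - u 1 * v 0) + (c 1 + c 7 * x 0) * (u 0 * v 2 - u 2 * v 0)
      + (c 3 + c 8 * x 0) * (u 0 * v 3 - u 3 * v 0) + c 2 * (u 1 * v 2 - u 2 * v 1)
      + c 4 * (u 1 * v 3 - u 3 * v 1) + c 5 * (u 2 * v 3 - u 3 * v 2) := by
  rw [Fin.sum_univ_castSucc, Fin.sum_univ_eight]
  have e : c 0 * (u 0 * v 1 - u 1 * v 0) + c 1 * (u 0 * v 2 - u 2 * v 0)
      + c 2 * (u 1 * v 2 - u 2 * v 1) + c 3 * (u 0 * v 3 - u 3 * v 0)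
      + c 4 * (u 1 * v 3 - u 3 * v 1) + c 5 * (u 2 * v 3 - u 3 * v 2)
      + c 6 * (x 0 * (u 0 * v 1 - u 1 * v 0)) + c 7 * (x 0 * (u 0 * v 2 - u 2 * v 0))
      + c 8 * (x 0 * (u 0 * v 3 - u 3 * v 0)) =
      (c 0 + c 6 * x 0) * (u 0 * v 1 - u 1 * v 0) + (c 1 + c 7 * x 0) * (u 0 * v 2 - u 2 * v 0)
      + (c 3 + c 8 * x 0) * (u 0 * v 3 - u 3 * v 0) + c 2 * (u 1 * v 2 - u 2 * v 1)
      + c 4 * (u 1 * v 3 - u 3 * v 1) + c 5 * (u 2 * v 3 - u 3 * v 2) := by ring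
  exact e

lemma hd_basis (c : Fin 9 → ℝ) (t : ℝ) (u v : Fin 4 → ℝ) :
    ∑ k, c k * basis4567 k (gcur t) u v =
      (c 0 + c 6 * t^4) * (u 0 * v 1 - u 1 * v 0) + (c 1 + c 7 * t^4) * (u 0 * v 2 - u 2 * v 0)
      + (c 3 + c 8 * t^4) * (u 0 * v 3 - u 3 * v 0) + c 2 * (u 1 * v 2 - u 2 * v 1)
      + c 4 * (u 1 * v 3 - u 3 * v 1) + c 5 * (u 2 * v 3 - u 3 * v 2) :=
  hd_basisx c (gcur t) u v

lemma hd_cert (A : Fin 6 → ℝ) (L : Fin 6 → Fin 4 → ℝ) (q : Fin 6 → Fin 4 → (Fin 4 → ℝ) → ℝ)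
    (hq : ∀ p k, ContDiff ℝ (⊤ : ℕ∞) (q p k))
    (h1 : L 1 1 = L 3 0 + L 0 2) (h2 : L 2 1 = L 4 0 + L 0 3)
    (h3 : L 2 2 = L 5 0 + L 1 3) (h4 : L 4 2 = L 5 1 + L 3 3) :
    ∃ (c : Fin 9 → ℝ) (H : Fin 6 → Fin 4 → (Fin 4 → ℝ) → ℝ),
      (∀ j i, ContDiff ℝ (⊤ : ℕ∞) (H j i)) ∧ ∀ (t : ℝ) (W : Fin 6 → ℝ),
        (∀ p, W p = A p + (L p 0 * t^4 + L p 1 * t^5 + L p 2 * t^6 + L p 3 * t^7) +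
        (q p 0 (gcur t) * t^8 + q p 1 (gcur t) * t^9 + q p 2 (gcur t) * t^10 + q p 3 (gcur t) * t^11)) →
        ∀ u v : Fin 4 → ℝ,
        (W 0 * (u 0 * v 1 - u 1 * v 0) + W 1 * (u 0 * v 2 - u 2 * v 0) + W 2 * (u 0 * v 3 - u 3 * v 0)
        + W 3 * (u 1 * v 2 - u 2 * v 1) + W 4 * (u 1 * v 3 - u 3 * v 1) + W 5 * (u 2 * v 3 - u 3 * v 2))
        - ∑ k, c k * basis4567 k (gcur t) u v
        = ∑ i, ∑ j, H j i (gcur t) * (hdfp j t u * v i - hdfp j t v * u i) := by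
  refine ⟨![A 0, A 1, A 3, A 2, A 4, A 5, L 0 0, L 1 0 + (1/2) * L 0 1, L 2 0 + (1) * L 0 2 + (1) * L 3 0],
    ![
      ![ fun x => (-1/2) * q 0 1 x * x 0 + (-7/19) * q 0 2 x * x 1 + (-1/2) * q 0 3 x * x 2 + (5/19) * q 1 1 x * x 1 + (-2/19) * q 2 0 x * x 1 + (-1/2) * q 2 1 x * x 2 + (-1/2) * q 2 2 x * x 3 + (-7/19) * q 3 0 x * x 1 + (-1) * q 4 0 x * x 2 + (-1/2) * L 0 1 * 1 + (1) * L 3 3 * x 0 + (-6/19) * L 4 3 * x 1 + (-3/19) * L 5 2 * x 1,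
         fun x => (-2/19) * q 0 2 x * x 0 + (-4/19) * q 1 1 x * x 0 + (-6/19) * q 2 0 x * x 0 + (17/19) * q 3 0 x * x 0 + (3/5) * q 3 2 x * x 2 + (3/5) * q 3 3 x * x 3 + (1) * q 4 0 x * x 1 + (1/5) * q 4 1 x * x 2 + (1/5) * q 4 2 x * x 3 + (1/5) * q 4 3 x * x 0^2 + (3/5) * q 5 1 x * x 3 + (3/5) * q 5 2 x * x 0^2 + (1) * L 3 0 * 1 + (-18/19) * L 4 3 * x 0 + (-9/19) * L 5 2 * x 0,
         fun x => (1/2) * q 3 1 x * x 0 + (-1/2) * q 5 0 x * x 1 + (1/2) * L 3 1 * 1 + (1/2) * L 4 0 * 1,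
         fun x => (-2/17) * q 0 0 x * 1 + (-2/17) * L 1 3 * 1 + (3/17) * L 3 2 * 1 + (6/17) * L 4 1 * 1 + (-5/17) * L 5 0 * 1],
      ![ fun x => (3/19) * q 0 2 x * x 0 + (6/19) * q 1 1 x * x 0 + (-10/19) * q 2 0 x * x 0 + (-1) * q 2 1 x * x 1 + (-1) * q 2 2 x * x 2 + (3/19) * q 3 0 x * x 0 + (1) * L 0 2 * 1 + (1) * L 3 0 * 1 + (-30/19) * L 4 3 * x 0 + (-15/19) * L 5 2 * x 0,
         fun x => (-1) * q 4 0 x * x 0 + (-1) * q 4 1 x * x 1 + (-1) * q 4 2 x * x 2 + (-1) * q 4 3 x * x 3 + (-1) * L 4 0 * 1,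
         fun x => (2/17) * q 0 0 x * 1 + (-1) * q 5 0 x * x 0 + (2/17) * L 1 3 * 1 + (-3/17) * L 3 2 * 1 + (-6/17) * L 4 1 * 1 + (-12/17) * L 5 0 * 1,
         fun x => (-1) * L 5 1 * 1],
      ![ fun x => (1) * L 0 3 * 1 + (1) * L 4 0 * 1,
         fun x => (4/17) * q 0 0 x * 1 + (4/17) * L 1 3 * 1 + (-6/17) * L 3 2 * 1 + (5/17) * L 4 1 * 1 + (10/17) * L 5 0 * 1,
         fun x => (1) * q 5 1 x * x 0 + (1) * q 5 2 x * x 1,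
         fun x => (-1) * L 4 3 * 1],
      ![ fun x => (1/4) * q 0 3 x * x 0 + (1/2) * q 1 2 x * x 0 + (1/2) * q 1 3 x * x 1 + (3/4) * q 2 1 x * x 0 + (3/4) * q 2 2 x * x 1 + (1/4) * q 2 3 x * x 2 + (1/4) * q 3 1 x * x 0 + (1/2) * q 4 0 x * x 0 + (1/4) * q 5 0 x * x 1 + (-1/2) * q 5 3 x * x 0^2 + (1) * L 0 3 * 1 + (1/2) * L 1 2 * 1 + (1/4) * L 3 1 * 1 + (5/4) * L 4 0 * 1 + (-1/2) * L 5 3 * x 0,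
         fun x => (5/17) * q 0 0 x * 1 + (1/5) * q 3 2 x * x 0 + (1/5) * q 3 3 x * x 1 + (2/5) * q 4 1 x * x 0 + (2/5) * q 4 2 x * x 1 + (2/5) * q 4 3 x * x 2 + (1/5) * q 5 1 x * x 1 + (1/5) * q 5 2 x * x 2 + (5/17) * L 1 3 * 1 + (1/17) * L 3 2 * 1 + (2/17) * L 4 1 * 1 + (4/17) * L 5 0 * 1,
         fun x => (1/6) * q 0 1 x * 1 + (1/3) * q 1 0 x * 1 + (1/6) * L 2 3 * 1 + (-1/3) * L 3 3 * 1 + (1/6) * L 5 1 * 1,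
         fun x => (1/19) * q 0 2 x * 1 + (2/19) * q 1 1 x * 1 + (3/19) * q 2 0 x * 1 + (1/19) * q 3 0 x * 1 + (-10/19) * L 4 3 * 1 + (-5/19) * L 5 2 * 1],
      ![ fun x => (2/17) * q 0 0 x * 1 + (-15/17) * L 1 3 * 1 + (-3/17) * L 3 2 * 1 + (-6/17) * L 4 1 * 1 + (-12/17) * L 5 0 * 1,
         fun x => (-1) * L 3 3 * 1,
         fun x => (-2/19) * q 0 2 x * 1 + (-4/19) * q 1 1 x * 1 + (-6/19) * q 2 0 x * 1 + (-2/19) * q 3 0 x * 1 + (-18/19) * L 4 3 * 1 + (-9/19) * L 5 2 * 1,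
         fun x => 0],
      ![ fun x => (-1/2) * q 2 3 x * x 0 + (-1/2) * L 2 3 * 1 + (-1/2) * L 5 1 * 1,
         fun x => 0,
         fun x => (-1/2) * q 5 3 x * x 0 + (-1/2) * L 5 3 * 1,
         fun x => 0]], ?_, ?_⟩
  · refine hd_all6 (P := fun r : Fin 4 → (Fin 4 → ℝ) → ℝ => ∀ i, ContDiff ℝ (⊤ : ℕ∞) (r i)) ?_ ?_ ?_ ?_ ?_ ?_ <;>
      refine hd_all4 (P := fun r : (Fin 4 → ℝ) → ℝ => ContDiff ℝ (⊤ : ℕ∞) r) ?_ ?_ ?_ ?_ <;> fun_prop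
  · intro t W hW u v
    rw [hd_expand (fun j i => _) t u v, hd_basis]
    simp only [hW, h1, h2, h3, h4]
    have g0 : gcur t 0 = t^4 := rfl
    have g1 : gcur t 1 = t^5 := rfl
    have g2 : gcur t 2 = t^6 := rfl
    have g3 : gcur t 3 = t^7 := rfl
    simp only [Matrix.cons_val]
    simp only [g0, g1, g2, g3]
    generalize gcur t = X
    ring

lemma hd_bilin (ω : Form2 4) (hω : IsForm2 4 ω) (x u v : Fin 4 → ℝ) :
    ω x u v = ω x (Pi.single 0 1) (Pi.single 1 1) * (u 0 * v 1 - u 1 * v 0)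
      + ω x (Pi.single 0 1) (Pi.single 2 1) * (u 0 * v 2 - u 2 * v 0)
      + ω x (Pi.single 0 1) (Pi.single 3 1) * (u 0 * v 3 - u 3 * v 0)
      + ω x (Pi.single 1 1) (Pi.single 2 1) * (u 1 * v 2 - u 2 * v 1)
      + ω x (Pi.single 1 1) (Pi.single 3 1) * (u 1 * v 3 - u 3 * v 1)
      + ω x (Pi.single 2 1) (Pi.single 3 1) * (u 2 * v 3 - u 3 * v 2) := by
  have h0 : ∀ v, ω x 0 v = 0 := by
    intro v
    have h := hω.1 x 0 0 v 1
    simp only [smul_zero, add_zero] at h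
    linarith
  have hl : ∀ u v, ω x u v = ∑ i, u i * ω x (Pi.single i 1) v := by
    intro u v
    let f : (Fin 4 → ℝ) →ₗ[ℝ] ℝ :=
      { toFun := fun u => ω x u v
        map_add' := fun a b => by
          have h := hω.1 x a b v 1
          rw [one_smul, one_mul] at h
          exact h
        map_smul' := fun c a => by
          have h := hω.1 x 0 a v c
          rw [zero_add, h0, zero_add] at h
          exact h }
    have h1 : f u = ∑ i, u i * f (Pi.single i 1) := by
      conv_lhs => rw [pi_eq_sum_univ' u]
      simp [map_sum]
    exact h1
  have hs : ∀ a b, ω x a b = - ω x b a := hω.2.1 x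
  have h2 : ∀ a, ω x a v = - ∑ j, v j * ω x (Pi.single j 1) a := fun a => by rw [hs a v, hl v a]
  rw [hl u v]
  simp only [h2 (Pi.single _ 1)]
  simp only [Fin.sum_univ_four]
  have e : ∀ a, ω x a a = 0 := fun a => by have := hs a a; linarith
  rw [e, e, e, e, hs (Pi.single 1 1) (Pi.single 0 1), hs (Pi.single 2 1) (Pi.single 0 1),
    hs (Pi.single 3 1) (Pi.single 0 1), hs (Pi.single 2 1) (Pi.single 1 1),
    hs (Pi.single 3 1) (Pi.single 1 1), hs (Pi.single 3 1) (Pi.single 2 1)]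
  ring

lemma gcur_tendsto : Tendsto gcur (𝓝 0) (𝓝 0) := by
  have hc : Continuous gcur := by
    refine continuous_pi fun i => ?_
    fin_cases i <;> simp [gcur] <;> fun_prop
  have h0 : gcur 0 = 0 := by
    ext i
    fin_cases i <;> simp [gcur]
  have := hc.tendsto 0
  rwa [h0] at this

lemma gcur_cont : Continuous gcur := by
  refine continuous_pi fun i => ?_
  fin_cases i <;> simp [gcur] <;> fun_prop

lemma hd_main_ex (ω : Form2 4) (hω : IsForm2 4 ω) (hcl : Closed2 4 ω) :
    ∃ c : Fin 9 → ℝ, ZeroAR2 4 (fun x u v => ω x u v - ∑ k, c k * basis4567 k x u v) gcur := by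
  choose F hF hFe using fun (a b : Fin 4) => hd_cut (fun x => ω x (Pi.single a 1) (Pi.single b 1))
    (hω.2.2 (Pi.single a 1) (Pi.single b 1))
  choose q hq hqe using fun (a b : Fin 4) => hd_quad (F a b) (hF a b)
  have hc : ∀ a b c : Fin 4, fderiv ℝ (F a c) 0 (Pi.single b 1) =
      fderiv ℝ (F b c) 0 (Pi.single a 1) + fderiv ℝ (F a b) 0 (Pi.single c 1) := by
    intro a b c
    have h := hcl.self_of_nhds (Pi.single a 1) (Pi.single b 1) (Pi.single c 1)
    unfold extD2 at h
    rw [(hFe a c).fderiv_eq, (hFe b c).fderiv_eq, (hFe a b).fderiv_eq]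
    linarith
  let ia : Fin 6 → Fin 4 := ![0, 0, 0, 1, 1, 2]
  let ib : Fin 6 → Fin 4 := ![1, 2, 3, 2, 3, 3]
  obtain ⟨c, H, hH, hid⟩ := hd_cert (fun p => F (ia p) (ib p) 0)
    (fun p k => fderiv ℝ (F (ia p) (ib p)) 0 (Pi.single k 1)) (fun p k => q (ia p) (ib p) k)
    (fun p k => hq _ _ k) (hc 0 1 2) (hc 0 1 3) (hc 0 2 3) (hc 1 2 3)
  refine ⟨c, hd_exist _ ⟨?_, ?_, ?_⟩ H hH ?_⟩
  · intro x u₁ u₂ v r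
    have e : ∑ k, c k * basis4567 k x (u₁ + r • u₂) v
        = ∑ k, c k * basis4567 k x u₁ v + r * ∑ k, c k * basis4567 k x u₂ v := by
      rw [hd_basisx, hd_basisx, hd_basisx]
      simp only [Pi.add_apply, Pi.smul_apply, smul_eq_mul]
      ring
    linear_combination hω.1 x u₁ u₂ v r - e
  · intro x u v
    have e : ∑ k, c k * basis4567 k x u v = - ∑ k, c k * basis4567 k x v u := by
      rw [hd_basisx, hd_basisx]
      ring
    linear_combination hω.2.1 x u v - e
  · intro u v
    obtain ⟨U, hU, hs⟩ := hω.2.2 u v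
    refine ⟨U, hU, hs.sub (ContDiff.contDiffOn ?_)⟩
    simp only [hd_basisx]
    fun_prop
  · have hall : ∀ᶠ x in 𝓝 (0 : Fin 4 → ℝ), ∀ a b, F a b x = ω x (Pi.single a 1) (Pi.single b 1) :=
      eventually_all.2 fun a => eventually_all.2 fun b => hFe a b
    filter_upwards [gcur_tendsto.eventually hall] with t ht u v
    rw [← hid t (fun p => F (ia p) (ib p) (gcur t)) (fun p => hqe _ _ t) u v, sub_left_inj]
    refine (hd_bilin ω hω (gcur t) u v).trans ?_
    simp only [← ht]
    rfl

lemma hd_extract (ω : Form2 4) (h : ZeroAR2 4 ω gcur) :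
    ∃ B : Fin 4 → (Fin 4 → ℝ) → ℝ, (∀ i, ContDiff ℝ (⊤ : ℕ∞) (B i)) ∧
      (∀ i, ∀ᶠ t in 𝓝 (0:ℝ), B i (gcur t) = 0) ∧
      ∀ᶠ t in 𝓝 (0:ℝ), ∀ a b, ω (gcur t) (Pi.single a 1) (Pi.single b 1) =
        fderiv ℝ (B b) (gcur t) (Pi.single a 1) - fderiv ℝ (B a) (gcur t) (Pi.single b 1) := by
  obtain ⟨α, β, hα, hβ, hα0, hβ0, hω⟩ := h
  choose B hB hBe using fun i : Fin 4 => hd_cut (fun x => β x (Pi.single i 1)) (hβ.2 (Pi.single i 1))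
  refine ⟨B, hB, fun i => ?_, ?_⟩
  · filter_upwards [gcur_tendsto.eventually (hBe i), hβ0] with t h1 h2
    rw [h1]
    exact h2 _
  · have hall : ∀ᶠ x in 𝓝 (0 : Fin 4 → ℝ), ∀ a, fderiv ℝ (B a) x = fderiv ℝ (fun x => β x (Pi.single a 1)) x :=
      eventually_all.2 fun a => (hBe a).fderiv
    filter_upwards [gcur_tendsto.eventually hall, gcur_tendsto.eventually hω, hα0] with t h1 h2 h3 a b
    rw [h1, h1]
    have := h2 (Pi.single a 1) (Pi.single b 1)
    rw [h3, zero_add] at this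
    exact this

lemma hd_van (B : (Fin 4 → ℝ) → ℝ) (hB : ContDiff ℝ (⊤ : ℕ∞) B)
    (h0 : ∀ᶠ t in 𝓝 (0:ℝ), B (gcur t) = 0) :
    ∃ (h : Fin 4 → Fin 4 → ℝ) (R : Fin 4 → ℝ → ℝ), (∀ b, Continuous (R b)) ∧
      (∀ a b, h a b = h b a) ∧ h 0 0 = 0 ∧ h 0 1 = 0 ∧ 2 * h 0 2 + h 1 1 = 0 ∧ h 0 3 + h 1 2 = 0 ∧
      ∀ b t, fderiv ℝ B (gcur t) (Pi.single b 1) =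
        h b 0 * t^4 + h b 1 * t^5 + h b 2 * t^6 + h b 3 * t^7 + t^8 * R b t := by
  have hp : ∀ b : Fin 4, ContDiff ℝ (⊤ : ℕ∞) (fun x => fderiv ℝ B x (Pi.single b 1)) := fun b =>
    (hB.fderiv_right (by simp)).clm_apply contDiff_const
  choose q hq hqe using fun b => hd_quad _ (hp b)
  let h : Fin 4 → Fin 4 → ℝ := fun b k =>
    fderiv ℝ (fun x => fderiv ℝ B x (Pi.single b 1)) 0 (Pi.single k 1)
  let R : Fin 4 → ℝ → ℝ := fun b t => q b 0 (gcur t) + q b 1 (gcur t) * t + q b 2 (gcur t) * t^2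
    + q b 3 (gcur t) * t^3
  have hR : ∀ b, Continuous (R b) := by
    intro b
    have : ∀ k, Continuous fun t => q b k (gcur t) := fun k => (hq b k).continuous.comp gcur_cont
    have h0 := this 0
    have h1 := this 1
    have h2 := this 2
    have h3 := this 3
    exact ((h0.add (h1.mul continuous_id)).add (h2.mul (continuous_pow 2))).add
      (h3.mul (continuous_pow 3))
  have hsym : ∀ a b, h a b = h b a := by
    have hd : DifferentiableAt ℝ (fderiv ℝ B) 0 :=
      ((hB.fderiv_right (m := (⊤ : ℕ∞)) (by simp)).differentiable (by simp)).differentiableAt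
    have e : ∀ a b, h a b = fderiv ℝ (fderiv ℝ B) 0 (Pi.single b 1) (Pi.single a 1) := by
      intro a b
      have := (hd.hasFDerivAt.clm_apply (hasFDerivAt_const (Pi.single a (1:ℝ) : Fin 4 → ℝ) (0 : Fin 4 → ℝ))).fderiv
      simp only [h]
      rw [this]
      simp
    have hs : IsSymmSndFDerivAt ℝ B 0 := hB.contDiffAt.isSymmSndFDerivAt (by
      simp only [minSmoothness_of_isRCLikeNormedField]
      exact WithTop.coe_le_coe.2 (le_top : (2 : ℕ∞) ≤ ⊤))
    intro a b
    rw [e, e]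
    exact hs _ _
  have hexp : ∀ b t, fderiv ℝ B (gcur t) (Pi.single b 1) = fderiv ℝ B 0 (Pi.single b 1) +
      (h b 0 * t^4 + h b 1 * t^5 + h b 2 * t^6 + h b 3 * t^7) + t^8 * R b t := by
    intro b t
    rw [hqe b t]
    simp only [h, R]
    ring
  have hder : ∀ᶠ t in 𝓝 (0:ℝ), fderiv ℝ B (gcur t) (Pi.single 0 1) * (4 * t^3)
      + fderiv ℝ B (gcur t) (Pi.single 1 1) * (5 * t^4)
      + fderiv ℝ B (gcur t) (Pi.single 2 1) * (6 * t^5)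
      + fderiv ℝ B (gcur t) (Pi.single 3 1) * (7 * t^6) = 0 := by
    filter_upwards [h0.eventually_nhds] with t ht
    have hg : HasDerivAt gcur ![4 * t^3, 5 * t^4, 6 * t^5, 7 * t^6] t := by
      rw [hasDerivAt_pi]
      intro i
      fin_cases i
      · simpa [gcur] using hasDerivAt_pow 4 t
      · simpa [gcur] using hasDerivAt_pow 5 t
      · simpa [gcur] using hasDerivAt_pow 6 t
      · simpa [gcur] using hasDerivAt_pow 7 t
    have h1 : HasFDerivAt B (fderiv ℝ B (gcur t)) (gcur t) :=
      (hB.differentiable (by simp)).differentiableAt.hasFDerivAt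
    have h2 := h1.comp_hasDerivAt t hg
    have h3 : HasDerivAt (B ∘ gcur) 0 t :=
      (hasDerivAt_const t (0:ℝ)).congr_of_eventuallyEq ht
    have h4 := h2.unique h3
    generalize fderiv ℝ B (gcur t) = D at h4 ⊢
    rw [pi_eq_sum_univ' ![4 * t^3, 5 * t^4, 6 * t^5, 7 * t^6], map_sum] at h4
    simp only [map_smul, smul_eq_mul, Fin.sum_univ_four] at h4
    simp at h4
    linear_combination h4
  obtain ⟨a0, a1, a2, a3, a4, a5, a6, a7⟩ := hd_poly (4 * fderiv ℝ B 0 (Pi.single 0 1))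
    (5 * fderiv ℝ B 0 (Pi.single 1 1)) (6 * fderiv ℝ B 0 (Pi.single 2 1))
    (7 * fderiv ℝ B 0 (Pi.single 3 1)) (4 * h 0 0) (4 * h 0 1 + 5 * h 1 0)
    (4 * h 0 2 + 5 * h 1 1 + 6 * h 2 0) (4 * h 0 3 + 5 * h 1 2 + 6 * h 2 1 + 7 * h 3 0)
    (fun t => 4 * R 0 t + 5 * R 1 t * t + 6 * R 2 t * t^2 + 7 * R 3 t * t^3
      + 5 * (h 1 3) + 6 * (h 2 2 + h 2 3 * t) + 7 * (h 3 1 + h 3 2 * t + h 3 3 * t^2))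
    (by have := hR 0; have := hR 1; have := hR 2; have := hR 3; fun_prop)
    (by
      filter_upwards [hder.filter_mono nhdsWithin_le_nhds, self_mem_nhdsWithin] with t ht ht0
      have ht3 : t^3 ≠ 0 := pow_ne_zero _ ht0
      rw [hexp, hexp, hexp, hexp] at ht
      apply mul_left_cancel₀ ht3
      linear_combination ht)
  refine ⟨h, R, hR, hsym, by linarith, by linarith [hsym 0 1], by linarith [hsym 0 2],
    by linarith [hsym 0 3, hsym 1 2], ?_⟩
  intro b t
  rw [hexp]
  have : fderiv ℝ B 0 (Pi.single b 1) = 0 := by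
    fin_cases b
    · simpa using a0
    · simpa using a1
    · simpa using a2
    · simpa using a3
  rw [this]
  ring

lemma hd_uniq (B : Fin 4 → (Fin 4 → ℝ) → ℝ) (hB : ∀ i, ContDiff ℝ (⊤ : ℕ∞) (B i))
    (h0 : ∀ i, ∀ᶠ t in 𝓝 (0:ℝ), B i (gcur t) = 0) (d : Fin 9 → ℝ)
    (hd : ∀ᶠ t in 𝓝 (0:ℝ), ∀ a b, ∑ k, d k * basis4567 k (gcur t) (Pi.single a 1) (Pi.single b 1) =
        fderiv ℝ (B b) (gcur t) (Pi.single a 1) - fderiv ℝ (B a) (gcur t) (Pi.single b 1)) :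
    d = 0 := by
  choose h R hR hs h00 h01 h02 h03 hexp using fun i => hd_van (B i) (hB i) (h0 i)
  have key : ∀ (a b : Fin 4) (x y : ℝ), (∀ t, ∑ k, d k * basis4567 k (gcur t) (Pi.single a 1) (Pi.single b 1)
      = x + y * t^4) → x = 0 ∧ y = h b a 0 - h a b 0 ∧ h b a 1 = h a b 1 := by
    intro a b x y hxy
    obtain ⟨a0, -, -, -, a4, a5, -, -⟩ := hd_poly x 0 0 0 (y - (h b a 0 - h a b 0))
      (0 - (h b a 1 - h a b 1)) (0 - (h b a 2 - h a b 2)) (0 - (h b a 3 - h a b 3))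
      (fun t => - (R b a t - R a b t)) (by have := hR b a; have := hR a b; fun_prop)
      (by
        filter_upwards [hd.filter_mono nhdsWithin_le_nhds] with t ht
        have := ht a b
        rw [hxy, hexp, hexp] at this
        linear_combination this)
    exact ⟨a0, by linarith, by linarith⟩
  obtain ⟨k01, l01, m01⟩ := key 0 1 (d 0) (d 6) (fun t => by rw [hd_basis]; simp)
  obtain ⟨k02, l02, m02⟩ := key 0 2 (d 1) (d 7) (fun t => by rw [hd_basis]; simp)
  obtain ⟨k03, l03, m03⟩ := key 0 3 (d 3) (d 8) (fun t => by rw [hd_basis]; simp)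
  obtain ⟨k12, -, -⟩ := key 1 2 (d 2) 0 (fun t => by rw [hd_basis]; simp)
  obtain ⟨k13, -, -⟩ := key 1 3 (d 4) 0 (fun t => by rw [hd_basis]; simp)
  obtain ⟨k23, -, -⟩ := key 2 3 (d 5) 0 (fun t => by rw [hd_basis]; simp)
  have e6 : d 6 = 0 := by linarith [h00 1, h01 0, hs 0 0 1]
  have e7 : d 7 = 0 := by linarith [h00 2, h01 1, h02 0, hs 0 0 2]
  have e8 : d 8 = 0 := by linarith [h00 3, h01 2, h03 0, hs 0 0 3, hs 0 1 2]
  ext k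
  fin_cases k
  exacts [k01, k02, k12, k03, k13, k23, e6, e7, e8]

theorem algRestriction_basis_4567
    (ω : Form2 4) (hω : IsForm2 4 ω) (hcl : Closed2 4 ω) :
    ∃! c : Fin 9 → ℝ,
      ZeroAR2 4 (fun x u v => ω x u v - ∑ k, c k * basis4567 k x u v)
        (fun t => ![t^4, t^5, t^6, t^7]) := by
  obtain ⟨c, hc⟩ := hd_main_ex ω hω hcl
  refine ⟨c, hc, fun c' hc' => ?_⟩
  obtain ⟨B, hB, hB0, hBe⟩ := hd_extract _ hc
  obtain ⟨B', hB', hB0', hBe'⟩ := hd_extract _ hc'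
  rw [← sub_eq_zero]
  refine hd_uniq (fun i x => B i x - B' i x) (fun i => (hB i).sub (hB' i)) (fun i => ?_) _ ?_
  · filter_upwards [hB0 i, hB0' i] with t h1 h2
    rw [h1, h2, sub_zero]
  · filter_upwards [hBe, hBe'] with t h1 h2 a b
    have e : ∀ i, fderiv ℝ (fun x => B i x - B' i x) (gcur t)
        = fderiv ℝ (B i) (gcur t) - fderiv ℝ (B' i) (gcur t) := fun i =>
      fderiv_fun_sub ((hB i).differentiable (by simp)).differentiableAt
        ((hB' i).differentiable (by simp)).differentiableAt
    have e2 : ∑ k, (c' - c) k * basis4567 k (gcur t) (Pi.single a 1) (Pi.single b 1)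
        = ∑ k, c' k * basis4567 k (gcur t) (Pi.single a 1) (Pi.single b 1)
        - ∑ k, c k * basis4567 k (gcur t) (Pi.single a 1) (Pi.single b 1) := by
      rw [← Finset.sum_sub_distrib]
      exact Finset.sum_congr rfl fun k _ => by rw [Pi.sub_apply, sub_mul]
    rw [e, e, e2, sub_apply, sub_apply]
    linear_combination h1 a b - h2 a b
end
end

section
/- Let g:(ℝ,0)→(ℝ^3,0) be the curve-germ g(t) = (t^4,t^5,t^6). For every germ at 0 of a smooth differential 2-form ω on ℝ^3 with dω = 0 on a neighbourhood of 0, there exist unique real numbers c_1,…,c_8 such that the 2-form ω − (c_1·dx_1∧dx_2 + c_2·dx_1∧dx_3 + c_3·dx_2∧dx_3 + c_4·x_1dx_1∧dx_2 + c_5·x_1dx_1∧dx_3 + c_6·(x_2dx_1∧dx_3 + x_1dx_2∧dx_3) + c_7·x_3dx_2∧dx_3 + c_8·x_2^2dx_1∧dx_2) has zero algebraic restriction to g. (Equivalently: the algebraic restrictions to g of these eight closed 2-forms form a basis of the vector space of algebraic restrictions of closed 2-forms to g.) -/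
open Filter Topology

noncomputable section

/-- The eight closed 2-forms of Proposition 5.2: `dx₁∧dx₂, dx₁∧dx₃, dx₂∧dx₃,
x₁dx₁∧dx₂, x₁dx₁∧dx₃, x₂dx₁∧dx₃ + x₁dx₂∧dx₃, x₃dx₂∧dx₃, x₂²dx₁∧dx₂`. -/
def basis456 : Fin 8 → Form2 3 :=
  ![wedge 3 0 1, wedge 3 0 2, wedge 3 1 2,
    mwedge 3 0 0 1, mwedge 3 0 0 2,
    fun x u v => x 1 * (u 0 * v 2 - u 2 * v 0) + x 0 * (u 1 * v 2 - u 2 * v 1),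
    mwedge 3 2 1 2,
    fun x u v => (x 1)^2 * (u 0 * v 1 - u 1 * v 0)]



/-- smooth germ -/
def SG (h : (Fin 3 → ℝ) → ℝ) : Prop := ∀ᶠ x in 𝓝 (0 : Fin 3 → ℝ), ContDiffAt ℝ (⊤ : ℕ∞) h x

lemma sg_iff (h : (Fin 3 → ℝ) → ℝ) :
    SG h ↔ ∃ U ∈ 𝓝 (0 : Fin 3 → ℝ), ContDiffOn ℝ (⊤ : ℕ∞) h U := by
  constructor
  · intro H
    refine ⟨_, H, fun x hx => ContDiffAt.contDiffWithinAt hx⟩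
  · rintro ⟨U, hU, hc⟩
    have := eventually_mem_nhds_iff.2 hU
    filter_upwards [this] with x hx
    exact hc.contDiffAt hx

lemma SG.congr {h k : (Fin 3 → ℝ) → ℝ} (hh : SG h) (e : h =ᶠ[𝓝 0] k) : SG k := by
  unfold SG at *
  filter_upwards [hh, e.eventuallyEq_nhds] with x h1 h2
  exact h1.congr_of_eventuallyEq h2.symm

lemma SG.of_contDiff {h : (Fin 3 → ℝ) → ℝ} (hh : ContDiff ℝ (⊤ : ℕ∞) h) : SG h :=
  Eventually.of_forall fun _ => hh.contDiffAt
lemma SG.const (c : ℝ) : SG (fun _ => c) := SG.of_contDiff contDiff_const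
lemma SG.coord (i : Fin 3) : SG (fun x => x i) := SG.of_contDiff (by fun_prop)
lemma SG.add {h k : (Fin 3 → ℝ) → ℝ} (hh : SG h) (hk : SG k) : SG (fun x => h x + k x) := by
  unfold SG at *
  filter_upwards [hh, hk] with x h1 h2 using h1.add h2
lemma SG.sub {h k : (Fin 3 → ℝ) → ℝ} (hh : SG h) (hk : SG k) : SG (fun x => h x - k x) := by
  unfold SG at *
  filter_upwards [hh, hk] with x h1 h2 using h1.sub h2
lemma SG.neg {h : (Fin 3 → ℝ) → ℝ} (hh : SG h) : SG (fun x => - h x) := by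
  unfold SG at *
  filter_upwards [hh] with x h1 using h1.neg
lemma SG.mul {h k : (Fin 3 → ℝ) → ℝ} (hh : SG h) (hk : SG k) : SG (fun x => h x * k x) := by
  unfold SG at *
  filter_upwards [hh, hk] with x h1 h2 using h1.mul h2
lemma SG.pow {h : (Fin 3 → ℝ) → ℝ} (hh : SG h) (n : ℕ) : SG (fun x => h x ^ n) := by
  unfold SG at *
  filter_upwards [hh] with x h1 using h1.pow n
lemma SG.fderiv {h : (Fin 3 → ℝ) → ℝ} (hh : SG h) (u : Fin 3 → ℝ) :
    SG (fun x => fderiv ℝ h x u) := by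
  unfold SG at *
  filter_upwards [hh] with x h1
  have : ContDiffAt ℝ (⊤ : ℕ∞) (_root_.fderiv ℝ h) x := h1.fderiv_right (by simp)
  exact this.clm_apply contDiffAt_const
lemma SG.diff {h : (Fin 3 → ℝ) → ℝ} (hh : SG h) : ∀ᶠ x in 𝓝 0, DifferentiableAt ℝ h x := by
  unfold SG at *
  filter_upwards [hh] with x h1
  exact h1.differentiableAt (by simp)

lemma exists_global {h : (Fin 3 → ℝ) → ℝ} (hh : SG h) :
    ∃ k : (Fin 3 → ℝ) → ℝ, ContDiff ℝ (⊤ : ℕ∞) k ∧ h =ᶠ[𝓝 0] k := by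
  obtain ⟨r, hr, hb⟩ := Metric.eventually_nhds_iff_ball.1 hh
  let χ : ContDiffBump (0 : Fin 3 → ℝ) := ⟨r/4, r/2, by positivity, by linarith⟩
  refine ⟨fun x => χ x * h x, ?_, ?_⟩
  · rw [contDiff_iff_contDiffAt]
    intro x
    by_cases hx : x ∈ Metric.ball (0 : Fin 3 → ℝ) r
    · exact (χ.contDiff.contDiffAt).mul (hb x hx)
    · have : x ∉ tsupport χ := by
        rw [χ.tsupport_eq]
        intro h'
        apply hx
        simp only [Metric.mem_closedBall, Metric.mem_ball] at *
        have : χ.rOut = r/2 := rfl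
        linarith
      have e := notMem_tsupport_iff_eventuallyEq.1 this
      refine (contDiffAt_const (c := (0:ℝ))).congr_of_eventuallyEq ?_
      filter_upwards [e] with y hy
      simp [hy]
  · filter_upwards [χ.eventuallyEq_one] with x hx
    simp [hx]

lemma param_int (F : (Fin 3 → ℝ) → ℝ → ℝ) (hF : ContDiff ℝ (⊤ : ℕ∞) (fun p : (Fin 3 → ℝ) × ℝ => F p.1 p.2)) :
    ContDiff ℝ (⊤ : ℕ∞) (fun x => ∫ t in (0:ℝ)..1, F x t) := by
  let χ : ContDiffBump (0 : ℝ) := ⟨2, 3, by norm_num, by norm_num⟩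
  have key := MeasureTheory.contDiffOn_convolution_right_with_param_comp (μ := MeasureTheory.volume) (n := ⊤)
    (ContinuousLinearMap.mul ℝ ℝ) (s := (Set.univ : Set (Fin 3 → ℝ))) (v := fun _ => (0:ℝ))
    contDiffOn_const (f := Set.indicator (Set.Ioc (0:ℝ) 1) (fun _ => (1:ℝ)))
    (g := fun x s => χ s * F x (-s)) (k := Metric.closedBall 0 3) isOpen_univ
    (isCompact_closedBall _ _) ?_ ?_ ?_
  · rw [contDiffOn_univ] at key
    convert key using 1
    ext x
    rw [MeasureTheory.convolution_def, intervalIntegral.integral_of_le zero_le_one,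
      ← MeasureTheory.integral_indicator measurableSet_Ioc]
    congr 1
    ext t
    by_cases ht : t ∈ Set.Ioc (0:ℝ) 1
    · have : χ (-t) = 1 := by
        apply χ.one_of_mem_closedBall
        simp only [Metric.mem_closedBall, dist_zero_right, norm_neg, Real.norm_eq_abs]
        rw [abs_of_pos ht.1]
        have : χ.rIn = 2 := rfl
        linarith [ht.2]
      simp [ht, this]
    · simp [ht]
  · intro p x _ hx
    have : χ x = 0 := by
      apply χ.zero_of_le_dist
      have : χ.rOut = 3 := rfl
      simp only [Metric.mem_closedBall] at hx
      linarith
    simp [this]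
  · apply MeasureTheory.Integrable.locallyIntegrable
    rw [MeasureTheory.integrable_indicator_iff measurableSet_Ioc]
    simp
  · apply ContDiff.contDiffOn
    have h1 : ContDiff ℝ (⊤ : ℕ∞) (fun p : (Fin 3 → ℝ) × ℝ => χ p.2) := χ.contDiff.comp contDiff_snd
    have h2 : ContDiff ℝ (⊤ : ℕ∞) (fun p : (Fin 3 → ℝ) × ℝ => F p.1 (-p.2)) :=
      hF.comp (contDiff_fst.prodMk contDiff_snd.neg)
    exact h1.mul h2

def ee (i : Fin 3) : Fin 3 → ℝ := Pi.single i 1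

lemma vec_eq (x : Fin 3 → ℝ) : x = ∑ i, x i • ee i := by
  simp only [ee]
  exact (pi_eq_sum_univ' x).trans (by simp [Pi.single_apply, funext_iff, Pi.single, Function.update])

lemma hadamard {h : (Fin 3 → ℝ) → ℝ} (hh : SG h) :
    ∃ H : Fin 3 → (Fin 3 → ℝ) → ℝ, (∀ i, SG (H i)) ∧
      (∀ᶠ x in 𝓝 (0 : Fin 3 → ℝ), h x = h 0 + ∑ i, x i * H i x) := by
  obtain ⟨k, hk, e⟩ := exists_global hh
  have hd : ContDiff ℝ (⊤ : ℕ∞) (_root_.fderiv ℝ k) := hk.fderiv_right (by simp)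
  refine ⟨fun i x => ∫ t in (0:ℝ)..1, _root_.fderiv ℝ k (t • x) (ee i), ?_, ?_⟩
  · intro i
    apply SG.of_contDiff
    apply param_int (fun x t => _root_.fderiv ℝ k (t • x) (ee i))
    refine ContDiff.clm_apply (hd.comp ?_) contDiff_const
    fun_prop
  · filter_upwards [e] with x hx
    rw [hx, e.eq_of_nhds]
    have := intervalIntegral.integral_eq_sub_of_hasDerivAt (a := 0) (b := 1)
      (f := fun t : ℝ => k (t • x)) (f' := fun t => _root_.fderiv ℝ k (t • x) x) ?_ ?_
    · have h2 : ∀ t : ℝ, _root_.fderiv ℝ k (t • x) x = ∑ i, x i * _root_.fderiv ℝ k (t • x) (ee i) := by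
        intro t
        conv_lhs => rw [vec_eq x]
        rw [map_sum]
        simp only [map_smul, smul_eq_mul]
        rw [← vec_eq]
      simp only [h2] at this
      rw [intervalIntegral.integral_finsetSum] at this
      · simp only [intervalIntegral.integral_const_mul] at this
        simp at this
        linarith
      · intro i _
        apply Continuous.intervalIntegrable
        have := hd.continuous
        fun_prop
    · intro t _
      have h1 : HasFDerivAt k (_root_.fderiv ℝ k (t • x)) (t • x) :=
        (hk.differentiable (by simp) _).hasFDerivAt
      have h2 : HasDerivAt (fun t : ℝ => t • x) x t := by
        simpa using (hasDerivAt_id t).smul_const x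
      exact h1.comp_hasDerivAt t h2
    · apply Continuous.intervalIntegrable
      have := hd.continuous
      fun_prop


def gc (t : ℝ) : Fin 3 → ℝ := ![t^4, t^5, t^6]

lemma gc_cont : Continuous gc := by
  unfold gc
  apply continuous_pi
  intro i
  fin_cases i <;> simp <;> fun_prop

lemma gc_zero : gc 0 = 0 := by
  ext i; fin_cases i <;> simp [gc]

lemma gc_apply (t : ℝ) (i : Fin 3) : gc t i = t^4 * t^(i:ℕ) := by
  fin_cases i <;> simp [gc] <;> ring

lemma gc_tendsto : Tendsto gc (𝓝 0) (𝓝 0) := by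
  have := gc_cont.tendsto 0
  rwa [gc_zero] at this

lemma SG.cont_gc {h : (Fin 3 → ℝ) → ℝ} (hh : SG h) : ContinuousAt (fun t => h (gc t)) 0 := by
  have h0 : ContinuousAt h (gc 0) := by
    rw [gc_zero]; exact hh.diff.self_of_nhds.continuousAt
  exact ContinuousAt.comp (f := gc) (g := h) h0 gc_cont.continuousAt

lemma hadamard_deriv {h : (Fin 3 → ℝ) → ℝ} {c : ℝ} {H : Fin 3 → (Fin 3 → ℝ) → ℝ}
    (hH : ∀ i, SG (H i)) (e : ∀ᶠ x in 𝓝 (0 : Fin 3 → ℝ), h x = c + ∑ i, x i * H i x) :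
    ∀ᶠ x in 𝓝 (0 : Fin 3 → ℝ), ∀ j,
      fderiv ℝ h x (ee j) = H j x + ∑ i, x i * fderiv ℝ (H i) x (ee j) := by
  filter_upwards [e.eventually_nhds, eventually_all.2 fun i => (hH i).diff] with x hx hd j
  have hx' : h =ᶠ[𝓝 x] fun x => c + ∑ i, x i * H i x := hx
  rw [hx'.fderiv_eq]
  have h1 : HasFDerivAt (fun x : Fin 3 → ℝ => c + ∑ i, x i * H i x)
      (∑ i, (x i • fderiv ℝ (H i) x +
        H i x • (ContinuousLinearMap.proj (R := ℝ) (φ := fun _ : Fin 3 => ℝ) i))) x := by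
    apply HasFDerivAt.const_add
    apply HasFDerivAt.fun_sum
    intro i _
    exact (hasFDerivAt_apply i x).mul (hd i).hasFDerivAt
  rw [h1.fderiv]
  simp only [Fin.sum_univ_three]
  fin_cases j <;> simp [ee] <;> ring

lemma poly_zero (n : ℕ) : ∀ (a : ℕ → ℝ) (r : ℝ → ℝ), ContinuousAt r 0 →
    (∀ᶠ t in 𝓝 (0:ℝ), ∑ i ∈ Finset.range n, a i * t^i + t^n * r t = 0) →
    ∀ i < n, a i = 0 := by
  induction n with
  | zero => intro a r _ _ i hi; omega
  | succ n ih =>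
    intro a r hr he
    have h0 : a 0 = 0 := by
      have := he.self_of_nhds
      simpa [Finset.sum_range_succ'] using this
    have hs : ∀ t, ∑ i ∈ Finset.range (n+1), a i * t^i + t^(n+1) * r t
        = t * (∑ i ∈ Finset.range n, a (i+1) * t^i + t^n * r t) := by
      intro t
      rw [Finset.sum_range_succ', h0, mul_add, Finset.mul_sum]
      simp only [zero_mul, add_zero, pow_succ]
      congr 1
      · apply Finset.sum_congr rfl
        intros; ring
      · ring
    simp only [hs] at he
    set s : ℝ → ℝ := fun t => ∑ i ∈ Finset.range n, a (i+1) * t^i + t^n * r t with hsdef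
    have sc : ContinuousAt s 0 := by
      rw [hsdef]; fun_prop
    have hp : ∀ᶠ t in 𝓝[≠] (0:ℝ), s t = 0 := by
      filter_upwards [he.filter_mono nhdsWithin_le_nhds, self_mem_nhdsWithin] with t h1 h2
      exact (mul_eq_zero.1 h1).resolve_left h2
    have hz : s 0 = 0 := by
      have t1 : Tendsto s (𝓝[≠] 0) (𝓝 (s 0)) := sc.tendsto.mono_left nhdsWithin_le_nhds
      have t2 : Tendsto s (𝓝[≠] 0) (𝓝 0) := (tendsto_congr' hp).2 tendsto_const_nhds
      exact tendsto_nhds_unique t1 t2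
    have hall : ∀ᶠ t in 𝓝 (0:ℝ), s t = 0 := by
      have := eventually_nhdsWithin_iff.1 hp
      filter_upwards [this] with t ht
      by_cases h : t = 0
      · rw [h, hz]
      · exact ht h
    intro i hi
    cases i with
    | zero => exact h0
    | succ i => exact ih (fun i => a (i+1)) r hr hall i (by omega)

lemma taylor3 {h : (Fin 3 → ℝ) → ℝ} (hh : SG h) :
    ∃ (c0 : ℝ) (c1 : Fin 3 → ℝ) (c2 : Fin 3 → Fin 3 → ℝ) (c3 : Fin 3 → Fin 3 → Fin 3 → ℝ)
      (S : ℝ → ℝ) (R : Fin 3 → ℝ → ℝ), ContinuousAt S 0 ∧ (∀ j, ContinuousAt (R j) 0) ∧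
      ∀ᶠ t in 𝓝 (0:ℝ),
        (h (gc t) = c0 + ∑ i, gc t i * c1 i + ∑ i, ∑ j, gc t i * gc t j * c2 i j
          + ∑ i, ∑ j, ∑ k, gc t i * gc t j * gc t k * c3 i j k + t^16 * S t) ∧
        ∀ j, fderiv ℝ h (gc t) (ee j) = c1 j + ∑ k, gc t k * (c2 j k + c2 k j)
          + ∑ k, ∑ l, gc t k * gc t l * (c3 j k l + c3 k j l + c3 k l j) + t^12 * R j t := by
  obtain ⟨H1, s1, e1⟩ := hadamard hh
  choose H2 s2 e2 using fun i => hadamard (s1 i)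
  choose H3 s3 e3 using fun i j => hadamard (s2 i j)
  choose H4 s4 e4 using fun i j k => hadamard (s3 i j k)
  let s : Fin 3 → Fin 3 → Fin 3 → ℝ → ℝ := fun i j k t => ∑ l : Fin 3, t^(l:ℕ) * H4 i j k l (gc t)
  let D : Fin 3 → Fin 3 → Fin 3 → Fin 3 → ℝ → ℝ :=
    fun i j k l t => fderiv ℝ (H3 i j k) (gc t) (ee l)
  have sc : ∀ i j k, ContinuousAt (s i j k) 0 := by
    intro i j k
    have q := fun l => (s4 i j k l).cont_gc
    have p : ∀ n : ℕ, ContinuousAt (fun t : ℝ => t ^ n) 0 := fun n => by fun_prop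
    simp only [s, Fin.sum_univ_three]
    exact (((p _).mul (q 0)).add ((p _).mul (q 1))).add ((p _).mul (q 2))
  have Dc : ∀ i j k l, ContinuousAt (D i j k l) 0 := fun i j k l => ((s3 i j k).fderiv _).cont_gc
  refine ⟨h 0, fun i => H1 i 0, fun i j => H2 i j 0, fun i j k => H3 i j k 0,
    fun t => ∑ i : Fin 3, ∑ j : Fin 3, ∑ k : Fin 3, t^(i:ℕ) * t^(j:ℕ) * t^(k:ℕ) * s i j k t,
    fun j t => ∑ k : Fin 3, ∑ l : Fin 3, t^(k:ℕ) * t^(l:ℕ) * (s j k l t + s k j l t + s k l j t)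
      + ∑ i : Fin 3, ∑ k : Fin 3, ∑ l : Fin 3, t^(i:ℕ) * t^(k:ℕ) * t^(l:ℕ) * D i k l j t,
    by simp only [Fin.sum_univ_three]; fun_prop, by intro j; simp only [Fin.sum_univ_three]; fun_prop, ?_⟩
  have d1 := hadamard_deriv s1 e1
  have d2 := eventually_all.2 fun i => hadamard_deriv (s2 i) (e2 i)
  have d3 := eventually_all.2 fun i => eventually_all.2 fun j => hadamard_deriv (s3 i j) (e3 i j)
  have f2 := eventually_all.2 e2
  have f3 := eventually_all.2 fun i => eventually_all.2 (e3 i)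
  have f4 := eventually_all.2 fun i => eventually_all.2 fun j => eventually_all.2 (e4 i j)
  filter_upwards [gc_tendsto.eventually e1, gc_tendsto.eventually f2, gc_tendsto.eventually f3,
    gc_tendsto.eventually f4, gc_tendsto.eventually d1, gc_tendsto.eventually d2,
    gc_tendsto.eventually d3] with t e1 e2 e3 e4 d1 d2 d3
  have e4' : ∀ i j k, H3 i j k (gc t) = H3 i j k 0 + t^4 * s i j k t := by
    intro i j k
    rw [e4]
    simp only [s, Finset.mul_sum, gc_apply, mul_assoc]
  constructor
  · rw [e1]
    simp only [e2, e3, e4', gc_apply, Fin.sum_univ_three]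
    ring
  · intro j
    rw [d1]
    simp only [d2, d3]
    simp only [e2, e3, e4', gc_apply, Fin.sum_univ_three]
    simp only [D]
    ring


lemma jetJ {h : (Fin 3 → ℝ) → ℝ} (hh : SG h) (hv : ∀ᶠ t in 𝓝 (0:ℝ), h (gc t) = 0) :
    ∃ (a b c d : ℝ) (rp rq rr : ℝ → ℝ), ContinuousAt rp 0 ∧ ContinuousAt rq 0 ∧ ContinuousAt rr 0 ∧
      ∀ᶠ t in 𝓝 (0:ℝ),
        fderiv ℝ h (gc t) (ee 0) = a * t^6 - 3 * b * t^8 + c * t^10 + t^11 * rp t ∧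
        fderiv ℝ h (gc t) (ee 1) = -2 * a * t^5 - 2 * c * t^9 + 2 * d * t^10 + t^11 * rq t ∧
        fderiv ℝ h (gc t) (ee 2) = a * t^4 + 2 * b * t^6 + c * t^8 - d * t^9 + t^10 * rr t := by
  obtain ⟨c0, c1, c2, c3, S, R, hS, hR, he⟩ := taylor3 hh
  have key := poly_zero 16 (fun n => ([c0, 0, 0, 0, c1 0, c1 1, c1 2, 0, c2 0 0, c2 0 1 + c2 1 0,
      c2 1 1 + c2 0 2 + c2 2 0, c2 1 2 + c2 2 1, c2 2 2 + c3 0 0 0,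
      c3 0 0 1 + c3 0 1 0 + c3 1 0 0,
      (c3 0 0 2 + c3 0 2 0 + c3 2 0 0) + (c3 0 1 1 + c3 1 0 1 + c3 1 1 0),
      c3 1 1 1 + (c3 0 1 2 + c3 0 2 1 + c3 1 0 2 + c3 1 2 0 + c3 2 0 1 + c3 2 1 0)] : List ℝ).getD n 0)
    (fun t => (c3 0 2 2 + c3 2 0 2 + c3 2 2 0) + (c3 1 1 2 + c3 1 2 1 + c3 2 1 1)
      + t * (c3 1 2 2 + c3 2 1 2 + c3 2 2 1) + t^2 * c3 2 2 2 + S t) (by fun_prop) (by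
      filter_upwards [hv, he] with t h1 h2
      have h3 := h2.1
      rw [h1] at h3
      simp only [gc_apply, Fin.sum_univ_three] at h3
      simp [Finset.sum_range_succ]
      simp at h3
      linear_combination -h3)
  have E4 := key 4 (by norm_num)
  have E5 := key 5 (by norm_num)
  have E6 := key 6 (by norm_num)
  have E8 := key 8 (by norm_num)
  have E9 := key 9 (by norm_num)
  have E10 := key 10 (by norm_num)
  have E11 := key 11 (by norm_num)
  have E12 := key 12 (by norm_num)
  have E13 := key 13 (by norm_num)
  have E14 := key 14 (by norm_num)
  have E15 := key 15 (by norm_num)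
  simp at E4 E5 E6 E8 E9 E10 E11 E12 E13 E14 E15
  have hR0 := hR 0
  have hR1 := hR 1
  have hR2 := hR 2
  refine ⟨c2 0 2 + c2 2 0, c2 2 2, c3 0 0 2 + c3 0 2 0 + c3 2 0 0, c3 1 1 1,
    fun t => (c3 0 1 2 + c3 0 2 1 + c3 1 0 2 + c3 1 2 0 + c3 2 0 1 + c3 2 1 0)
      + t * (c3 0 2 2 + c3 2 0 2 + c3 2 2 0) + t * R 0 t,
    fun t => 2 * (c3 1 1 2 + c3 1 2 1 + c3 2 1 1) + t * (c3 1 2 2 + c3 2 1 2 + c3 2 2 1) + t * R 1 t,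
    fun t => (c3 1 1 2 + c3 1 2 1 + c3 2 1 1) + 2 * (c3 0 2 2 + c3 2 0 2 + c3 2 2 0)
      + 2 * t * (c3 1 2 2 + c3 2 1 2 + c3 2 2 1) + 3 * t^2 * c3 2 2 2 + t^2 * R 2 t,
    by fun_prop, by fun_prop, by fun_prop, ?_⟩
  filter_upwards [he] with t ht
  have hd := ht.2
  simp only [gc_apply, Fin.sum_univ_three] at hd
  have d0 := hd 0
  have d1 := hd 1
  have d2 := hd 2
  simp at d0 d1 d2
  refine ⟨?_, ?_, ?_⟩
  · linear_combination d0 + E4 + 2 * E8 * t^4 + E9 * t^5 + 3 * E12 * t^8 + 2 * E13 * t^9 + E14 * t^10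
  · linear_combination d1 + E5 + t^4 * E9 + 2 * t^5 * E10 + t^6 * E11 + t^8 * E13 + 2 * t^9 * E14
      + t^10 * E15
  · linear_combination d2 + E6 + t^5 * E11 + t^9 * E15

lemma uniq_core (b : Fin 3 → (Fin 3 → ℝ) → ℝ) (hb : ∀ i, SG (b i))
    (hv : ∀ i, ∀ᶠ t in 𝓝 (0:ℝ), b i (gc t) = 0) (c : Fin 8 → ℝ)
    (H : ∀ᶠ t in 𝓝 (0:ℝ),
      c 0 + c 3 * t^4 + c 7 * t^10
        = fderiv ℝ (b 1) (gc t) (ee 0) - fderiv ℝ (b 0) (gc t) (ee 1) ∧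
      c 1 + c 4 * t^4 + c 5 * t^5
        = fderiv ℝ (b 2) (gc t) (ee 0) - fderiv ℝ (b 0) (gc t) (ee 2) ∧
      c 2 + c 5 * t^4 + c 6 * t^6
        = fderiv ℝ (b 2) (gc t) (ee 1) - fderiv ℝ (b 1) (gc t) (ee 2)) : c = 0 := by
  obtain ⟨a0, b0, c0, d0, p0, q0, r0, hp0, hq0, hr0, h0⟩ := jetJ (hb 0) (hv 0)
  obtain ⟨a1, b1, c1, d1, p1, q1, r1, hp1, hq1, hr1, h1⟩ := jetJ (hb 1) (hv 1)
  obtain ⟨a2, b2, c2, d2, p2, q2, r2, hp2, hq2, hr2, h2⟩ := jetJ (hb 2) (hv 2)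
  have k1 := poly_zero 11 (fun n => ([c 0, 0, 0, 0, c 3, -2 * a0, -a1, 0, 3 * b1, -2 * c0,
      c 7 - c1 + 2 * d0] : List ℝ).getD n 0) (fun t => q0 t - p1 t) (by fun_prop) (by
      filter_upwards [h0, h1, H] with t x0 x1 x
      simp [Finset.sum_range_succ]
      linear_combination x.1 + x1.1 - x0.2.1)
  have k2 := poly_zero 10 (fun n => ([c 1, 0, 0, 0, c 4 + a0, c 5, -a2 + 2 * b0, 0, 3 * b2 + c0,
      -d0] : List ℝ).getD n 0) (fun t => -c2 - t * p2 t + r0 t) (by fun_prop) (by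
      filter_upwards [h0, h2, H] with t x0 x1 x
      simp [Finset.sum_range_succ]
      linear_combination x.2.1 + x1.1 - x0.2.2)
  have k3 := poly_zero 10 (fun n => ([c 2, 0, 0, 0, c 5 + a1, 2 * a2, c 6 + 2 * b1, 0, c1,
      2 * c2 - d1] : List ℝ).getD n 0) (fun t => -2 * d2 - t * q2 t + r1 t) (by fun_prop) (by
      filter_upwards [h1, h2, H] with t x0 x1 x
      simp [Finset.sum_range_succ]
      linear_combination x.2.2 + x1.2.1 - x0.2.2)
  have z0 := k1 0 (by norm_num)
  have z3 := k1 4 (by norm_num)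
  have z5 := k1 5 (by norm_num)
  have z8 := k1 8 (by norm_num)
  have z10 := k1 10 (by norm_num)
  have y0 := k2 0 (by norm_num)
  have y4 := k2 4 (by norm_num)
  have y5 := k2 5 (by norm_num)
  have y9 := k2 9 (by norm_num)
  have w0 := k3 0 (by norm_num)
  have w6 := k3 6 (by norm_num)
  have w8 := k3 8 (by norm_num)
  simp at z0 z3 z5 z8 z10 y0 y4 y5 y9 w0 w6 w8
  funext k
  fin_cases k <;> simp <;> linarith


lemma form2_add_left {ω : Form2 3} (hω : IsForm2 3 ω) (x u₁ u₂ v : Fin 3 → ℝ) :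
    ω x (u₁ + u₂) v = ω x u₁ v + ω x u₂ v := by
  have := hω.1 x u₁ u₂ v 1
  simpa using this

lemma form2_zero_left {ω : Form2 3} (hω : IsForm2 3 ω) (x v : Fin 3 → ℝ) : ω x 0 v = 0 := by
  have := hω.1 x 0 0 v 1
  simpa using this

lemma form2_smul_left {ω : Form2 3} (hω : IsForm2 3 ω) (x u v : Fin 3 → ℝ) (c : ℝ) :
    ω x (c • u) v = c * ω x u v := by
  have := hω.1 x 0 u v c
  rwa [zero_add, form2_zero_left hω, zero_add] at this

lemma form2_self {ω : Form2 3} (hω : IsForm2 3 ω) (x v : Fin 3 → ℝ) : ω x v v = 0 := by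
  have := hω.2.1 x v v
  linarith

lemma form2_left {ω : Form2 3} (hω : IsForm2 3 ω) (x u v : Fin 3 → ℝ) :
    ω x u v = u 0 * ω x (ee 0) v + u 1 * ω x (ee 1) v + u 2 * ω x (ee 2) v := by
  conv_lhs => rw [vec_eq u]
  rw [Fin.sum_univ_three, form2_add_left hω, form2_add_left hω]
  simp only [form2_smul_left hω]

lemma form2_eq {ω : Form2 3} (hω : IsForm2 3 ω) (x u v : Fin 3 → ℝ) :
    ω x u v = ω x (ee 0) (ee 1) * (u 0 * v 1 - u 1 * v 0)
      + ω x (ee 0) (ee 2) * (u 0 * v 2 - u 2 * v 0)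
      + ω x (ee 1) (ee 2) * (u 1 * v 2 - u 2 * v 1) := by
  have e : ∀ i, ω x (ee i) v = -(v 0 * ω x (ee 0) (ee i) + v 1 * ω x (ee 1) (ee i)
      + v 2 * ω x (ee 2) (ee i)) := by
    intro i
    rw [hω.2.1, form2_left hω x v]
  rw [form2_left hω x u, e, e, e, form2_self hω, form2_self hω, form2_self hω,
    hω.2.1 x (ee 1) (ee 0), hω.2.1 x (ee 2) (ee 0), hω.2.1 x (ee 2) (ee 1)]
  ring

lemma form2_sg {ω : Form2 3} (hω : IsForm2 3 ω) (u v : Fin 3 → ℝ) : SG (fun x => ω x u v) :=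
  (sg_iff _).2 (hω.2.2 u v)

lemma isForm2_mk {A B C : (Fin 3 → ℝ) → ℝ} (hA : SG A) (hB : SG B) (hC : SG C) :
    IsForm2 3 (fun x u v => A x * (u 0 * v 1 - u 1 * v 0) + B x * (u 0 * v 2 - u 2 * v 0)
      + C x * (u 1 * v 2 - u 2 * v 1)) := by
  refine ⟨?_, ?_, ?_⟩
  · intro x u₁ u₂ v c
    simp
    ring
  · intro x u v
    ring
  · intro u v
    rw [← sg_iff]
    exact ((hA.mul (SG.const _)).add (hB.mul (SG.const _))).add (hC.mul (SG.const _))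

lemma zeroAR_of {ω : Form2 3} (hω : IsForm2 3 ω) (b : Fin 3 → (Fin 3 → ℝ) → ℝ) (hb : ∀ i, SG (b i))
    (hv : ∀ i, ∀ᶠ t in 𝓝 (0:ℝ), b i (gc t) = 0)
    (H : ∀ᶠ t in 𝓝 (0:ℝ),
      ω (gc t) (ee 0) (ee 1) = fderiv ℝ (b 1) (gc t) (ee 0) - fderiv ℝ (b 0) (gc t) (ee 1) ∧
      ω (gc t) (ee 0) (ee 2) = fderiv ℝ (b 2) (gc t) (ee 0) - fderiv ℝ (b 0) (gc t) (ee 2) ∧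
      ω (gc t) (ee 1) (ee 2) = fderiv ℝ (b 2) (gc t) (ee 1) - fderiv ℝ (b 1) (gc t) (ee 2)) :
    ZeroAR2 3 ω gc := by
  refine ⟨fun x u v =>
      (ω x (ee 0) (ee 1) - (fderiv ℝ (b 1) x (ee 0) - fderiv ℝ (b 0) x (ee 1)))
        * (u 0 * v 1 - u 1 * v 0)
      + (ω x (ee 0) (ee 2) - (fderiv ℝ (b 2) x (ee 0) - fderiv ℝ (b 0) x (ee 2)))
        * (u 0 * v 2 - u 2 * v 0)
      + (ω x (ee 1) (ee 2) - (fderiv ℝ (b 2) x (ee 1) - fderiv ℝ (b 1) x (ee 2)))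
        * (u 1 * v 2 - u 2 * v 1),
    fun x u => u 0 * b 0 x + u 1 * b 1 x + u 2 * b 2 x, ?_, ?_, ?_, ?_, ?_⟩
  · exact isForm2_mk
      ((form2_sg hω _ _).sub (((hb 1).fderiv _).sub ((hb 0).fderiv _)))
      ((form2_sg hω _ _).sub (((hb 2).fderiv _).sub ((hb 0).fderiv _)))
      ((form2_sg hω _ _).sub (((hb 2).fderiv _).sub ((hb 1).fderiv _)))
  · refine ⟨?_, ?_⟩
    · intro x u₁ u₂ c
      simp
      ring
    · intro u
      rw [← sg_iff]
      exact (((SG.const _).mul (hb 0)).add ((SG.const _).mul (hb 1))).add ((SG.const _).mul (hb 2))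
  · filter_upwards [H] with t ht u v
    rw [ht.1, ht.2.1, ht.2.2]
    ring
  · filter_upwards [hv 0, hv 1, hv 2] with t h0 h1 h2 u
    rw [h0, h1, h2]
    ring
  · filter_upwards [(hb 0).diff, (hb 1).diff, (hb 2).diff] with x h0 h1 h2 u v
    have hd : ∀ u v : Fin 3 → ℝ, fderiv ℝ (fun y => u 0 * b 0 y + u 1 * b 1 y + u 2 * b 2 y) x v
        = u 0 * fderiv ℝ (b 0) x v + u 1 * fderiv ℝ (b 1) x v + u 2 * fderiv ℝ (b 2) x v := by
      intro u v
      have := (((h0.hasFDerivAt.const_mul (u 0)).add (h1.hasFDerivAt.const_mul (u 1))).add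
        (h2.hasFDerivAt.const_mul (u 2))).fderiv
      have e : (fun y => u 0 * b 0 y + u 1 * b 1 y + u 2 * b 2 y) =
        ((fun y => u 0 * b 0 y) + (fun y => u 1 * b 1 y)) + (fun y => u 2 * b 2 y) := rfl
      rw [e, this]
      simp
    have hl : ∀ i, ∀ u : Fin 3 → ℝ, fderiv ℝ (b i) x u = u 0 * fderiv ℝ (b i) x (ee 0)
        + u 1 * fderiv ℝ (b i) x (ee 1) + u 2 * fderiv ℝ (b i) x (ee 2) := by
      intro i u
      conv_lhs => rw [vec_eq u]
      rw [Fin.sum_univ_three]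
      simp
    rw [form2_eq hω x u v]
    unfold extD1
    rw [hd, hd, hl 0 u, hl 1 u, hl 2 u, hl 0 v, hl 1 v, hl 2 v]
    ring

lemma basis_sum (c : Fin 8 → ℝ) (x u v : Fin 3 → ℝ) : ∑ k, c k * basis456 k x u v
    = c 0 * (u 0 * v 1 - u 1 * v 0) + c 1 * (u 0 * v 2 - u 2 * v 0) + c 2 * (u 1 * v 2 - u 2 * v 1)
      + c 3 * (x 0 * (u 0 * v 1 - u 1 * v 0)) + c 4 * (x 0 * (u 0 * v 2 - u 2 * v 0))
      + c 5 * (x 1 * (u 0 * v 2 - u 2 * v 0) + x 0 * (u 1 * v 2 - u 2 * v 1))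
      + c 6 * (x 2 * (u 1 * v 2 - u 2 * v 1)) + c 7 * ((x 1)^2 * (u 0 * v 1 - u 1 * v 0)) := by
  rw [Fin.sum_univ_eight]
  rfl

lemma basis_isForm2 (c : Fin 8 → ℝ) : IsForm2 3 (fun x u v => ∑ k, c k * basis456 k x u v) := by
  have := isForm2_mk (A := fun x => c 0 + c 3 * x 0 + c 7 * (x 1)^2)
    (B := fun x => c 1 + c 4 * x 0 + c 5 * x 1) (C := fun x => c 2 + c 5 * x 0 + c 6 * x 2)
    (SG.of_contDiff (by fun_prop)) (SG.of_contDiff (by fun_prop)) (SG.of_contDiff (by fun_prop))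
  refine Eq.mp (congrArg (IsForm2 3) ?_) this
  funext x u v
  rw [basis_sum]
  ring

lemma basis_01 (c : Fin 8 → ℝ) (x : Fin 3 → ℝ) : ∑ k, c k * basis456 k x (ee 0) (ee 1)
    = c 0 + c 3 * x 0 + c 7 * (x 1)^2 := by
  rw [basis_sum]
  simp [ee]
lemma basis_02 (c : Fin 8 → ℝ) (x : Fin 3 → ℝ) : ∑ k, c k * basis456 k x (ee 0) (ee 2)
    = c 1 + c 4 * x 0 + c 5 * x 1 := by
  rw [basis_sum]
  simp [ee]
lemma basis_12 (c : Fin 8 → ℝ) (x : Fin 3 → ℝ) : ∑ k, c k * basis456 k x (ee 1) (ee 2)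
    = c 2 + c 5 * x 0 + c 6 * x 2 := by
  rw [basis_sum]
  simp [ee]

lemma form2_sub {ω η : Form2 3} (hω : IsForm2 3 ω) (hη : IsForm2 3 η) :
    IsForm2 3 (fun x u v => ω x u v - η x u v) := by
  refine ⟨?_, ?_, ?_⟩
  · intro x u₁ u₂ v c
    have h1 := hω.1 x u₁ u₂ v c
    have h2 := hη.1 x u₁ u₂ v c
    show ω x (u₁ + c • u₂) v - η x (u₁ + c • u₂) v = (ω x u₁ v - η x u₁ v) + c * (ω x u₂ v - η x u₂ v)
    rw [h1, h2]; ring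
  · intro x u v
    have h1 := hω.2.1 x u v
    have h2 := hη.2.1 x u v
    show ω x u v - η x u v = -(ω x v u - η x v u)
    rw [h1, h2]; ring
  · intro u v
    rw [← sg_iff]
    exact (form2_sg hω u v).sub (form2_sg hη u v)

lemma uniq {ω : Form2 3} {c d : Fin 8 → ℝ}
    (hc : ZeroAR2 3 (fun x u v => ω x u v - ∑ k, c k * basis456 k x u v) gc)
    (hd : ZeroAR2 3 (fun x u v => ω x u v - ∑ k, d k * basis456 k x u v) gc) : c = d := by
  obtain ⟨α, β, hα, hβ, vα, vβ, e⟩ := hc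
  obtain ⟨α', β', hα', hβ', vα', vβ', e'⟩ := hd
  have sβ : ∀ i, SG (fun x => β x (ee i)) := fun i => (sg_iff _).2 (hβ.2 _)
  have sβ' : ∀ i, SG (fun x => β' x (ee i)) := fun i => (sg_iff _).2 (hβ'.2 _)
  have key := uniq_core (fun i x => β' x (ee i) - β x (ee i)) (fun i => (sβ' i).sub (sβ i))
    (fun i => by
      filter_upwards [vβ, vβ'] with t h1 h2
      rw [h1, h2, sub_zero]) (c - d) (by
      have d1 := eventually_all.2 fun i => (sβ i).diff
      have d2 := eventually_all.2 fun i => (sβ' i).diff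
      filter_upwards [vα, vα', gc_tendsto.eventually e, gc_tendsto.eventually e',
        gc_tendsto.eventually d1, gc_tendsto.eventually d2] with t v1 v2 e1 e2 d1 d2
      have hs : ∀ i u, fderiv ℝ (fun x => β' x (ee i) - β x (ee i)) (gc t) u =
          fderiv ℝ (fun x => β' x (ee i)) (gc t) u - fderiv ℝ (fun x => β x (ee i)) (gc t) u := by
        intro i u
        rw [fderiv_fun_sub (d2 i) (d1 i)]
        rfl
      have v1' : ∀ u v, α (gc t) u v = 0 := v1
      have v2' : ∀ u v, α' (gc t) u v = 0 := v2
      simp only [hs]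
      have a1 := e1 (ee 0) (ee 1)
      have a2 := e1 (ee 0) (ee 2)
      have a3 := e1 (ee 1) (ee 2)
      have b1 := e2 (ee 0) (ee 1)
      have b2 := e2 (ee 0) (ee 2)
      have b3 := e2 (ee 1) (ee 2)
      rw [basis_01, v1'] at a1
      rw [basis_02, v1'] at a2
      rw [basis_12, v1'] at a3
      rw [basis_01, v2'] at b1
      rw [basis_02, v2'] at b2
      rw [basis_12, v2'] at b3
      simp only [extD1, gc_apply] at a1 a2 a3 b1 b2 b3
      simp at a1 a2 a3 b1 b2 b3
      simp only [Pi.sub_apply]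
      refine ⟨?_, ?_, ?_⟩
      · linear_combination b1 - a1
      · linear_combination b2 - a2
      · linear_combination b3 - a3)
  exact sub_eq_zero.1 key


lemma fderiv_b {f g : (Fin 3 → ℝ) → ℝ} (hf : SG f) (hg : SG g) :
    ∀ᶠ t in 𝓝 (0:ℝ),
      fderiv ℝ (fun x => (x 1 ^ 2 - x 0 * x 2) * f x + (x 2 ^ 2 - x 0 ^ 3) * g x) (gc t) (ee 0)
        = - t^6 * f (gc t) - 3 * t^8 * g (gc t) ∧
      fderiv ℝ (fun x => (x 1 ^ 2 - x 0 * x 2) * f x + (x 2 ^ 2 - x 0 ^ 3) * g x) (gc t) (ee 1)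
        = 2 * t^5 * f (gc t) ∧
      fderiv ℝ (fun x => (x 1 ^ 2 - x 0 * x 2) * f x + (x 2 ^ 2 - x 0 ^ 3) * g x) (gc t) (ee 2)
        = - t^4 * f (gc t) + 2 * t^6 * g (gc t) := by
  filter_upwards [gc_tendsto.eventually hf.diff, gc_tendsto.eventually hg.diff] with t h1 h2
  have c : ∀ i : Fin 3, HasFDerivAt (fun x : Fin 3 → ℝ => x i)
    (ContinuousLinearMap.proj (R := ℝ) (φ := fun _ : Fin 3 => ℝ) i) (gc t) :=
    fun i => hasFDerivAt_apply i (gc t)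
  have key := (((((c 1).pow 2).sub ((c 0).mul (c 2))).mul h1.hasFDerivAt).add
    ((((c 2).pow 2).sub ((c 0).pow 3)).mul h2.hasFDerivAt)).fderiv
  have e : (fun x : Fin 3 → ℝ => (x 1 ^ 2 - x 0 * x 2) * f x + (x 2 ^ 2 - x 0 ^ 3) * g x) =
    (((fun x : Fin 3 → ℝ => x 1) ^ 2 - (fun x : Fin 3 → ℝ => x 0) * (fun x : Fin 3 → ℝ => x 2)) * f
     + ((fun x : Fin 3 → ℝ => x 2) ^ 2 - (fun x : Fin 3 → ℝ => x 0) ^ 3) * g) := rfl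
  have e' := key
  rw [e]
  refine ⟨?_, ?_, ?_⟩
  all_goals
    refine (congrArg (fun T : (Fin 3 → ℝ) →L[ℝ] ℝ => T _) key).trans ?_
    simp [ee, gc_apply]
    ring

set_option maxHeartbeats 1000000 in
lemma exist_core {A B C : (Fin 3 → ℝ) → ℝ} (hA : SG A) (hB : SG B) (hC : SG C)
    (hcl : fderiv ℝ C 0 (ee 0) - fderiv ℝ B 0 (ee 1) + fderiv ℝ A 0 (ee 2) = 0) :
    ∃ (c : Fin 8 → ℝ) (f1 f2 f3 f4 f5 f6 : (Fin 3 → ℝ) → ℝ),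
      SG f1 ∧ SG f2 ∧ SG f3 ∧ SG f4 ∧ SG f5 ∧ SG f6 ∧ ∀ᶠ t in 𝓝 (0:ℝ),
        A (gc t) - (c 0 + c 3 * t^4 + c 7 * t^10)
          = - 2 * t^5 * f1 (gc t) - t^6 * f2 (gc t) - 3 * t^8 * f5 (gc t) ∧
        B (gc t) - (c 1 + c 4 * t^4 + c 5 * t^5)
          = t^4 * f1 (gc t) - t^6 * f3 (gc t) - 2 * t^6 * f4 (gc t) - 3 * t^8 * f6 (gc t) ∧
        C (gc t) - (c 2 + c 5 * t^4 + c 6 * t^6)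
          = t^4 * f2 (gc t) + 2 * t^5 * f3 (gc t) - 2 * t^6 * f5 (gc t) := by
  obtain ⟨A1, sA1, eA1⟩ := hadamard hA
  choose A2 sA2 eA2 using fun i => hadamard (sA1 i)
  choose A3 sA3 eA3 using fun i j => hadamard (sA2 i j)
  obtain ⟨B1, sB1, eB1⟩ := hadamard hB
  choose B2 sB2 eB2 using fun i => hadamard (sB1 i)
  choose B3 sB3 eB3 using fun i j => hadamard (sB2 i j)
  obtain ⟨C1, sC1, eC1⟩ := hadamard hC
  choose C2 sC2 eC2 using fun i => hadamard (sC1 i)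
  choose C3 sC3 eC3 using fun i j => hadamard (sC2 i j)
  have dA := (hadamard_deriv sA1 eA1).self_of_nhds 2
  have dB := (hadamard_deriv sB1 eB1).self_of_nhds 1
  have dC := (hadamard_deriv sC1 eC1).self_of_nhds 0
  rw [dA, dB, dC] at hcl
  simp only [Pi.zero_apply, zero_mul, Finset.sum_const_zero, add_zero] at hcl
  clear dA dB dC
  obtain ⟨K, sK, hK⟩ : ∃ K : Fin 3 → (Fin 3 → ℝ) → ℝ, (∀ k, SG (K k)) ∧ ∀ k x, K k x =
      (A3 1 1 k x + A3 0 2 k x + A3 2 0 k x) + 2 * (B3 0 1 k x + B3 1 0 k x) + C3 0 0 k x :=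
    ⟨_, fun k => ((((sA3 1 1 k).add (sA3 0 2 k)).add (sA3 2 0 k)).add
      ((SG.const 2).mul ((sB3 0 1 k).add (sB3 1 0 k)))).add (sC3 0 0 k), fun _ _ => rfl⟩
  refine ⟨![A 0, B 0, C 0, A1 0 0, B1 0 0 + A1 1 0 / 2, B1 1 0, C1 2 0 - 2/3 * A2 0 0 0,
      (A2 1 1 0 + A2 0 2 0 + A2 2 0 0) + 2 * (B2 0 1 0 + B2 1 0 0) + C2 0 0 0],
    fun x => (-1/2) * A1 1 0 + (-1/2) * x 0 * x 0 * A3 0 0 1 x + (-1/2) * x 0 * x 1 * A3 0 0 2 x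
      + (-1/2) * x 0 * (A2 0 1 x + A2 1 0 x) + (-1/2) * x 0 * x 1 * K 0 x
      + (-1/2) * x 0 * x 2 * K 1 x + x 1 * (B2 0 1 x + B2 1 0 x) + (-1/2) * x 0 * x 1 * C2 2 2 x,
    fun x => (-1) * A1 2 0 + (-1) * x 2 * A3 0 0 0 x + (-1) * x 0 * x 2 * K 2 x
      + (-1) * x 1 * (A2 1 2 x + A2 2 1 x) + (-1) * x 2 * A2 2 2 x + x 0 * C2 0 0 x
      + x 0 * x 0 * C2 2 2 x,
    fun x => (1/2) * x 1 * A3 0 0 0 x + (1/2) * x 0 * x 1 * K 2 x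
      + (1/2) * x 0 * (A2 1 2 x + A2 2 1 x) + (1/2) * x 1 * A2 2 2 x + (1/2) * C1 1 0
      + (1/2) * x 0 * (C2 0 1 x + C2 1 0 x) + (1/2) * x 1 * (C2 1 1 x + C2 0 2 x + C2 2 0 x)
      + (1/2) * x 2 * (C2 1 2 x + C2 2 1 x),
    fun x => (-1/4) * x 1 * A3 0 0 0 x + (-1/4) * x 0 * x 1 * K 2 x
      + (-1/4) * x 0 * (A2 1 2 x + A2 2 1 x) + (-1/4) * x 1 * A2 2 2 x + (-1/2) * B1 2 0
      + (-1/2) * x 0 * (B2 1 1 x + B2 0 2 x + B2 2 0 x) + (-1/2) * x 1 * (B2 1 2 x + B2 2 1 x)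
      + (-1/2) * x 2 * B2 2 2 x + (-1/4) * C1 1 0
      + (-1/4) * x 0 * (C2 0 1 x + C2 1 0 x) + (-1/4) * x 1 * (C2 1 1 x + C2 0 2 x + C2 2 0 x)
      + (-1/4) * x 2 * (C2 1 2 x + C2 2 1 x),
    fun x => (-1/3) * A2 0 0 0,
    fun x => (-1/6) * x 0 * A3 0 0 1 x + (-1/6) * x 1 * A3 0 0 2 x
      + (-1/6) * (A2 0 1 x + A2 1 0 x) + (-1/6) * x 1 * K 0 x + (-1/6) * x 2 * K 1 x
      + (-1/3) * B2 0 0 x + (-1/6) * x 1 * C2 2 2 x, ?_, ?_, ?_, ?_, ?_, ?_, ?_⟩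
  iterate 6
    · repeat' first
        | with_reducible exact SG.const _
        | with_reducible exact SG.coord _
        | with_reducible exact sK _
        | with_reducible exact sA3 _ _ _
        | with_reducible exact sA2 _ _
        | with_reducible exact sB2 _ _
        | with_reducible exact sC2 _ _
        | with_reducible refine SG.add ?_ ?_
        | with_reducible refine SG.mul ?_ ?_
  have eA2' := eventually_all.2 eA2
  have eB2' := eventually_all.2 eB2
  have eC2' := eventually_all.2 eC2
  have eA3' := eventually_all.2 fun i => eventually_all.2 (eA3 i)
  have eB3' := eventually_all.2 fun i => eventually_all.2 (eB3 i)
  have eC3' := eventually_all.2 fun i => eventually_all.2 (eC3 i)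
  filter_upwards [gc_tendsto.eventually eA1, gc_tendsto.eventually eB1, gc_tendsto.eventually eC1,
    gc_tendsto.eventually eA2', gc_tendsto.eventually eB2', gc_tendsto.eventually eC2',
    gc_tendsto.eventually eA3', gc_tendsto.eventually eB3', gc_tendsto.eventually eC3'] with
    t a1 b1 c1 a2 b2 c2 a3 b3 c3
  have a00 := a3 0 0
  have a11 := a3 1 1
  have a02 := a3 0 2
  have a20 := a3 2 0
  have b01 := b3 0 1
  have b10 := b3 1 0
  have c00 := c3 0 0
  have g0 : gc t 0 = t^4 := rfl
  have g1 : gc t 1 = t^5 := rfl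
  have g2 : gc t 2 = t^6 := rfl
  simp only [Fin.sum_univ_three, g0, g1, g2] at a1 b1 c1 a2 b2 c2 a00 a11 a02 a20 b01 b10 c00
  simp only [g0, g1, g2, hK, a1, b1, c1, a2, b2, c2]
  rw [a00, a11, a02, a20, b01, b10, c00]
  refine ⟨?_, ?_, ?_⟩
  · simp
    ring
  · simp
    ring
  · simp
    linear_combination t^4 * hcl

lemma exist {ω : Form2 3} (hω : IsForm2 3 ω) (hcl : Closed2 3 ω) :
    ∃ c : Fin 8 → ℝ, ZeroAR2 3 (fun x u v => ω x u v - ∑ k, c k * basis456 k x u v) gc := by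
  obtain ⟨c, f1, f2, f3, f4, f5, f6, s1, s2, s3, s4, s5, s6, H⟩ :=
    exist_core (form2_sg hω (ee 0) (ee 1)) (form2_sg hω (ee 0) (ee 2)) (form2_sg hω (ee 1) (ee 2))
      (hcl.self_of_nhds (ee 0) (ee 1) (ee 2))
  have sh1 : SG (fun x => x 1 ^ 2 - x 0 * x 2) := SG.of_contDiff (by fun_prop)
  have sh2 : SG (fun x => x 2 ^ 2 - x 0 ^ 3) := SG.of_contDiff (by fun_prop)
  have vb : ∀ (f g : (Fin 3 → ℝ) → ℝ) (t : ℝ), (gc t 1 ^ 2 - gc t 0 * gc t 2) * f (gc t)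
      + (gc t 2 ^ 2 - gc t 0 ^ 3) * g (gc t) = 0 := by
    intro f g t
    have g0 : gc t 0 = t^4 := rfl
    have g1 : gc t 1 = t^5 := rfl
    have g2 : gc t 2 = t^6 := rfl
    rw [g0, g1, g2]
    ring
  refine ⟨c, zeroAR_of (form2_sub hω (basis_isForm2 c))
    ![fun x => (x 1 ^ 2 - x 0 * x 2) * f1 x + (x 2 ^ 2 - x 0 ^ 3) * f4 x,
      fun x => (x 1 ^ 2 - x 0 * x 2) * f2 x + (x 2 ^ 2 - x 0 ^ 3) * f5 x,
      fun x => (x 1 ^ 2 - x 0 * x 2) * f3 x + (x 2 ^ 2 - x 0 ^ 3) * f6 x] ?_ ?_ ?_⟩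
  · intro i
    fin_cases i
    · exact (sh1.mul s1).add (sh2.mul s4)
    · exact (sh1.mul s2).add (sh2.mul s5)
    · exact (sh1.mul s3).add (sh2.mul s6)
  · intro i
    fin_cases i
    · exact Eventually.of_forall (vb f1 f4)
    · exact Eventually.of_forall (vb f2 f5)
    · exact Eventually.of_forall (vb f3 f6)
  · filter_upwards [H, fderiv_b s1 s4, fderiv_b s2 s5, fderiv_b s3 s6] with t h d1 d2 d3
    have g0 : gc t 0 = t^4 := rfl
    have g1 : gc t 1 = t^5 := rfl
    have g2 : gc t 2 = t^6 := rfl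
    obtain ⟨h1, h2, h3⟩ := h
    refine ⟨?_, ?_, ?_⟩
    · refine Eq.trans ?_ (congrArg₂ (· - ·) d2.1 d1.2.1).symm
      show ω (gc t) (ee 0) (ee 1) - ∑ k, c k * basis456 k (gc t) (ee 0) (ee 1) = _
      rw [basis_01, g0, g1]
      linear_combination h1
    · refine Eq.trans ?_ (congrArg₂ (· - ·) d3.1 d1.2.2).symm
      show ω (gc t) (ee 0) (ee 2) - ∑ k, c k * basis456 k (gc t) (ee 0) (ee 2) = _
      rw [basis_02, g0, g1]
      linear_combination h2
    · refine Eq.trans ?_ (congrArg₂ (· - ·) d3.2.1 d2.2.2).symm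
      show ω (gc t) (ee 1) (ee 2) - ∑ k, c k * basis456 k (gc t) (ee 1) (ee 2) = _
      rw [basis_12, g0, g2]
      linear_combination h3


/-- The algebraic restrictions to `g(t) = (t⁴,t⁵,t⁶)` of the eight closed 2-forms above
form a basis of the space of algebraic restrictions of closed 2-forms. -/
theorem algRestriction_basis_456
    (ω : Form2 3) (hω : IsForm2 3 ω) (hcl : Closed2 3 ω) :
    ∃! c : Fin 8 → ℝ,
      ZeroAR2 3 (fun x u v => ω x u v - ∑ k, c k * basis456 k x u v)
        (fun t => ![t^4, t^5, t^6]) := by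
  obtain ⟨c, hc⟩ := exist hω hcl
  exact ⟨c, hc, fun d hd => uniq hd hc⟩
end
end
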